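/- There exist constants ε₀ ∈ (0,1) and C > 0, depending only on n, κ0, κ1 and C₀, such that for every ε ∈ (0, ε₀) and every harmonic function u on Ω₁ with boundary values φ on Γ₁⁺ and ψ on Γ₁⁻, one has for every x = (x', x_n) ∈ Ω_{1/2}: |∇u(x)| ≤ C·|φ(x') − ψ(x')|/(ε + |x'|²) + C·(‖φ‖_{C²} + ‖ψ‖_{C²} + ‖u‖_{L²(Ω₁)}). -/

import Mathlib

open MeasureTheory Metric Finset

noncomputable section

/-- `ℝ^{n-1}`, the horizontal (tangential) variables `x'`. -/
abbrev Ep (n : ℕ) := EuclideanSpace ℝ (Fin (n - 1))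

/-- `ℝ^n = ℝ^{n-1} × ℝ`, points written `x = (x', x_n)`. -/
abbrev Efull (n : ℕ) := Ep n × ℝ

/-- The narrow region `Ω_r`. -/
def Omega (n : ℕ) (ε : ℝ) (h1 h2 : Ep n → ℝ) (r : ℝ) : Set (Efull n) :=
  {x | ‖x.1‖ < r ∧ -ε/2 + h2 x.1 < x.2 ∧ x.2 < ε/2 + h1 x.1}

/-- Top boundary `Γ_r⁺`. -/
def Gammap (n : ℕ) (ε : ℝ) (h1 : Ep n → ℝ) (r : ℝ) : Set (Efull n) :=
  {x | ‖x.1‖ ≤ r ∧ x.2 = ε/2 + h1 x.1}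

/-- Bottom boundary `Γ_r⁻`. -/
def Gammam (n : ℕ) (ε : ℝ) (h2 : Ep n → ℝ) (r : ℝ) : Set (Efull n) :=
  {x | ‖x.1‖ ≤ r ∧ x.2 = -ε/2 + h2 x.1}

/-- `Ω̂_s(x₀) = {x ∈ Ω_{1/2} : |x' - x₀'| < s}`. -/
def OmegaHat (n : ℕ) (ε : ℝ) (h1 h2 : Ep n → ℝ) (x0 : Efull n) (s : ℝ) : Set (Efull n) :=
  {x | x ∈ Omega n ε h1 h2 (1/2) ∧ ‖x.1 - x0.1‖ < s}

/-- The `n` coordinate directions of `ℝ^{n-1} × ℝ`: the first `n-1` are the horizontal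
Euclidean basis vectors, the last is the vertical direction. -/
def dir (n : ℕ) (α : Fin n) : Efull n :=
  if h : (α : ℕ) < n - 1 then (EuclideanSpace.single (⟨(α : ℕ), h⟩ : Fin (n - 1)) 1, (0:ℝ))
  else (0, 1)

/-- Tangential direction `e_α` for `α ∈ {1, …, n-1}`. -/
def tang (n : ℕ) (α : Fin (n - 1)) : Efull n := (EuclideanSpace.single α 1, (0:ℝ))

/-- Vertical direction `e_n`. -/
def vert (n : ℕ) : Efull n := (0, 1)

/-- Pointwise Laplacian `Δu = Σ_α ∂_α∂_α u`. -/
def lapl (n : ℕ) (u : Efull n → ℝ) (x : Efull n) : ℝ :=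
  ∑ α : Fin n, fderiv ℝ (fun y => fderiv ℝ u y (dir n α)) x (dir n α)

/-- The auxiliary function `ū(x', x_n) = (x_n - h2(x') + ε/2)/(ε + h1(x') - h2(x'))`. -/
def ubar (n : ℕ) (ε : ℝ) (h1 h2 : Ep n → ℝ) (x : Efull n) : ℝ :=
  (x.2 - h2 x.1 + ε/2) / (ε + h1 x.1 - h2 x.1)

/-- The auxiliary function `ũ = φ(x')·ū + ψ(x')·(1 - ū)`. -/
def util (n : ℕ) (ε : ℝ) (h1 h2 φ ψ : Ep n → ℝ) (x : Efull n) : ℝ :=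
  φ x.1 * ubar n ε h1 h2 x + ψ x.1 * (1 - ubar n ε h1 h2 x)

/-- `C²`-norm on the closed unit ball: `sup_{|x'| ≤ 1} (|f| + |∇f| + |∇²f|)`. -/
def C2norm {F : Type*} [NormedAddCommGroup F] [NormedSpace ℝ F] (n : ℕ)
    (f : Ep n → F) : ℝ :=
  ⨆ y : closedBall (0 : Ep n) 1,
    (‖f (y : Ep n)‖ + ‖fderiv ℝ f (y : Ep n)‖ + ‖fderiv ℝ (fderiv ℝ f) (y : Ep n)‖)

/-- `C²(S)`-norm of a function on `ℝ^n`. -/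
def C2normOn (n : ℕ) (S : Set (Efull n)) (f : Efull n → ℝ) : ℝ :=
  ⨆ y : S,
    (‖f (y : Efull n)‖ + ‖fderiv ℝ f (y : Efull n)‖ + ‖fderiv ℝ (fderiv ℝ f) (y : Efull n)‖)

/-- `‖∇f‖_∞ = sup_{|x'| ≤ 1} |∇f(x')|`. -/
def gradSup {F : Type*} [NormedAddCommGroup F] [NormedSpace ℝ F] (n : ℕ) (f : Ep n → F) : ℝ :=
  ⨆ y : closedBall (0 : Ep n) 1, ‖fderiv ℝ f (y : Ep n)‖

/-- `‖∇²f‖_∞ = sup_{|x'| ≤ 1} |∇²f(x')|`. -/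
def hessSup {F : Type*} [NormedAddCommGroup F] [NormedSpace ℝ F] (n : ℕ) (f : Ep n → F) : ℝ :=
  ⨆ y : closedBall (0 : Ep n) 1, ‖fderiv ℝ (fderiv ℝ f) (y : Ep n)‖

/-- The geometric hypotheses on `h1, h2`: `C²` on the closed unit ball, the two graphs
do not touch, flatness at the origin, strict convexity of the gap, and `C²`-bound `κ1`. -/
def HGeom (n : ℕ) (ε κ0 κ1 : ℝ) (h1 h2 : Ep n → ℝ) : Prop :=
  ContDiffOn ℝ 2 h1 (closedBall 0 1) ∧ ContDiffOn ℝ 2 h2 (closedBall 0 1) ∧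
  (∀ y : Ep n, ‖y‖ ≤ 1 → -ε/2 + h2 y < ε/2 + h1 y) ∧
  h1 0 = 0 ∧ h2 0 = 0 ∧ fderiv ℝ h1 0 = 0 ∧ fderiv ℝ h2 0 = 0 ∧
  (∀ v : Ep n, κ0 * ‖v‖^2 ≤ fderiv ℝ (fderiv ℝ (fun y => h1 y - h2 y)) 0 v v) ∧
  C2norm n h1 + C2norm n h2 ≤ κ1

/-- Comparability `(ε + |x'|²)/C₀ ≤ δ(x') ≤ C₀ (ε + |x'|²)`. -/
def DeltaComp (n : ℕ) (ε C₀ : ℝ) (h1 h2 : Ep n → ℝ) : Prop :=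
  ∀ y : Ep n, ‖y‖ ≤ 1 →
    (ε + ‖y‖^2) / C₀ ≤ ε + h1 y - h2 y ∧ ε + h1 y - h2 y ≤ C₀ * (ε + ‖y‖^2)

/-- Hypotheses on the coefficients: `C²`-regularity with total `C²(Ω₁)`-norm at most `κ2`,
boundedness `|A| ≤ Λ`, and the weak ellipticity (Legendre) condition with constant `λ`. -/
def CoeffHyp (n N : ℕ) (ε lam Lam κ2 : ℝ) (h1 h2 : Ep n → ℝ)
    (A : Fin n → Fin n → Fin N → Fin N → Efull n → ℝ)
    (B : Fin n → Fin N → Fin N → Efull n → ℝ)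
    (Cc : Fin n → Fin N → Fin N → Efull n → ℝ)
    (Dc : Fin N → Fin N → Efull n → ℝ) : Prop :=
  (∀ α β i j, ContDiffOn ℝ 2 (A α β i j) (Omega n ε h1 h2 1)) ∧
  (∀ α i j, ContDiffOn ℝ 2 (B α i j) (Omega n ε h1 h2 1)) ∧
  (∀ β i j, ContDiffOn ℝ 2 (Cc β i j) (Omega n ε h1 h2 1)) ∧
  (∀ i j, ContDiffOn ℝ 2 (Dc i j) (Omega n ε h1 h2 1)) ∧
  ((∑ α : Fin n, ∑ β : Fin n, ∑ i : Fin N, ∑ j : Fin N,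
      C2normOn n (Omega n ε h1 h2 1) (A α β i j)) +
   (∑ α : Fin n, ∑ i : Fin N, ∑ j : Fin N, C2normOn n (Omega n ε h1 h2 1) (B α i j)) +
   (∑ β : Fin n, ∑ i : Fin N, ∑ j : Fin N, C2normOn n (Omega n ε h1 h2 1) (Cc β i j)) +
   (∑ i : Fin N, ∑ j : Fin N, C2normOn n (Omega n ε h1 h2 1) (Dc i j)) ≤ κ2) ∧
  (∀ α β i j, ∀ x ∈ Omega n ε h1 h2 1, |A α β i j x| ≤ Lam) ∧
  (∀ ξ : Efull n → EuclideanSpace ℝ (Fin N), ContDiff ℝ (⊤ : ℕ∞) ξ →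
    HasCompactSupport ξ → tsupport ξ ⊆ Omega n ε h1 h2 1 →
    lam * ∫ x in Omega n ε h1 h2 1, ‖fderiv ℝ ξ x‖^2 ≤
      ∫ x in Omega n ε h1 h2 1,
        ∑ α : Fin n, ∑ β : Fin n, ∑ i : Fin N, ∑ j : Fin N,
          A α β i j x * fderiv ℝ ξ x (dir n α) i * fderiv ℝ ξ x (dir n β) j)

/-- `u` is a weak solution of
`∂_α(A^{αβ}_{ij} ∂_β u^j + B^α_{ij} u^j) + C^β_{ij} ∂_β u^j + D_{ij} u^j = 0` in `Ω₁`. -/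
def WeakSol (n N : ℕ) (ε : ℝ) (h1 h2 : Ep n → ℝ)
    (A : Fin n → Fin n → Fin N → Fin N → Efull n → ℝ)
    (B : Fin n → Fin N → Fin N → Efull n → ℝ)
    (Cc : Fin n → Fin N → Fin N → Efull n → ℝ)
    (Dc : Fin N → Fin N → Efull n → ℝ)
    (u : Efull n → EuclideanSpace ℝ (Fin N)) : Prop :=
  ContDiffOn ℝ 1 u (Omega n ε h1 h2 1) ∧
  IntegrableOn (fun x => ‖u x‖^2 + ‖fderiv ℝ u x‖^2) (Omega n ε h1 h2 1) ∧
  ∀ ζ : Efull n → EuclideanSpace ℝ (Fin N), ContDiff ℝ (⊤ : ℕ∞) ζ →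
    HasCompactSupport ζ → tsupport ζ ⊆ Omega n ε h1 h2 1 →
    (∫ x in Omega n ε h1 h2 1,
      ((∑ α : Fin n, ∑ i : Fin N,
          ((∑ β : Fin n, ∑ j : Fin N, A α β i j x * fderiv ℝ u x (dir n β) j) +
            ∑ j : Fin N, B α i j x * u x j) * fderiv ℝ ζ x (dir n α) i) -
        ∑ i : Fin N,
          ((∑ β : Fin n, ∑ j : Fin N, Cc β i j x * fderiv ℝ u x (dir n β) j) +
            ∑ j : Fin N, Dc i j x * u x j) * ζ x i)) = 0

/-- `u` attains the boundary values `(φ, ψ)` on `Γ₁⁺` and `Γ₁⁻`. -/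
def AttainsBV {F : Type*} [NormedAddCommGroup F] [NormedSpace ℝ F] (n : ℕ) (ε : ℝ)
    (h1 h2 : Ep n → ℝ) (u : Efull n → F) (φ ψ : Ep n → F) : Prop :=
  ContinuousOn u (Omega n ε h1 h2 1 ∪ Gammap n ε h1 1 ∪ Gammam n ε h2 1) ∧
  (∀ y : Ep n, ‖y‖ ≤ 1 → u (y, ε/2 + h1 y) = φ y ∧ u (y, -ε/2 + h2 y) = ψ y)

/-- `u` is a harmonic function on `Ω₁` with boundary values `φ` on `Γ₁⁺` and `ψ` on `Γ₁⁻`. -/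
def HarmBV (n : ℕ) (ε : ℝ) (h1 h2 : Ep n → ℝ) (u : Efull n → ℝ) (φ ψ : Ep n → ℝ) : Prop :=
  ContDiffOn ℝ 2 u (Omega n ε h1 h2 1) ∧
  (∀ x ∈ Omega n ε h1 h2 1, lapl n u x = 0) ∧
  IntegrableOn (fun x => ‖u x‖^2 + ‖fderiv ℝ u x‖^2) (Omega n ε h1 h2 1) ∧
  AttainsBV n ε h1 h2 u φ ψ

/-!
Three elementary facts about harmonic functions give the bound.

*Local maximum principle* (`HarmBV.abs_le_add`). Above the maximum of its boundary data, a convex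
`C²` truncation of `u` vanishes near the two graphs, so its extension by zero is subharmonic on the
whole cylinder `|x'| < 1`. The mean value inequality on a ball of fixed size then bounds `|u|` over
`|x'| < 3/4` by the data and `‖u‖_{L²}`, uniformly in `ε`. Mean values are taken with the weight
`ρ(y) = (1 - |y|²)₊`, whose derivative in the radius is one integration by parts.

*Linear growth* (`NeckSide.abs_sub_le`). Let `t` be the vertical distance to the graph carrying the
datum `φ`, let `p = ε + |x₀'|²`, and let `M` bound the data and `u`. Over `|x' - x₀'| ≤ √p/8` the
height of the region is comparable to `p`, and there `(a/τ) t (2τ - t) + b |x' - x₀'|²` with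
`b ~ M/p`, `a ~ |φ(x₀') - ψ(x₀')|/p + M` and `τ ~ min(p, 1)` is superharmonic and dominates
`±(u - φ)` on the boundary. On the other graph this uses that `|φ - ψ|` grows from its value at
`x₀'` by at most `2M|x' - x₀'|`, which is absorbed by `Mp + M|x' - x₀'|²/p`. Hence
`|u - φ| ≤ C (|φ(x₀') - ψ(x₀')|/p + M) t` at `x₀`.

*Interior gradient estimate* (`norm_fderiv_le_of_lapl_eq_zero`). At a point at distance `t` from the
nearer graph, a ball of radius comparable to `t` lies in the region, and on it `u` differs from the
constant `φ(x₀')` by at most `C (|φ(x₀') - ψ(x₀')|/p + M) t`; divide by the radius.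
-/
open Filter Topology

/-! ### Second directional derivatives -/

section SecondDirDeriv

variable {E F : Type*} [NormedAddCommGroup E] [NormedSpace ℝ E] [NormedAddCommGroup F]
  [NormedSpace ℝ F] {f g : E → ℝ} {x : E}

/-- The second derivative `∂_e ∂_e f (x)` of `f` at `x` in the direction `e`; the Laplacian `lapl`
is the sum of these over the coordinate directions. -/
def secondDirDeriv (f : E → ℝ) (x e : E) : ℝ := fderiv ℝ (fun y => fderiv ℝ f y e) x e

lemma eventually_differentiableAt (hf : ContDiffAt ℝ 2 f x) :
    ∀ᶠ y in 𝓝 x, DifferentiableAt ℝ f y :=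
  (hf.eventually (by simp)).mono fun _ hy => hy.differentiableAt two_ne_zero

lemma differentiableAt_fderiv (hf : ContDiffAt ℝ 2 f x) : DifferentiableAt ℝ (fderiv ℝ f) x :=
  (hf.fderiv_right (m := 1) (by norm_num)).differentiableAt one_ne_zero

lemma differentiableAt_fderiv_apply (hf : ContDiffAt ℝ 2 f x) (e : E) :
    DifferentiableAt ℝ (fun y => fderiv ℝ f y e) x :=
  (differentiableAt_fderiv hf).clm_apply (differentiableAt_const e)

lemma secondDirDeriv_eq_fderiv_fderiv (hf : ContDiffAt ℝ 2 f x) (e : E) :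
    secondDirDeriv f x e = fderiv ℝ (fderiv ℝ f) x e e := by
  rw [secondDirDeriv, fderiv_clm_apply (differentiableAt_fderiv hf) (differentiableAt_const e)]
  simp

lemma secondDirDeriv_eq_of_eventuallyEq {a : E → ℝ} {e : E}
    (h : (fun y => fderiv ℝ f y e) =ᶠ[𝓝 x] a) : secondDirDeriv f x e = fderiv ℝ a x e := by
  rw [secondDirDeriv, h.fderiv_eq]

lemma secondDirDeriv_congr (h : f =ᶠ[𝓝 x] g) (e : E) :
    secondDirDeriv f x e = secondDirDeriv g x e :=
  secondDirDeriv_eq_of_eventuallyEq <| (h.fderiv (𝕜 := ℝ)).mono fun _ hy =>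
    DFunLike.congr_fun hy e

lemma secondDirDeriv_add (hf : ContDiffAt ℝ 2 f x) (hg : ContDiffAt ℝ 2 g x) (e : E) :
    secondDirDeriv (fun y => f y + g y) x e = secondDirDeriv f x e + secondDirDeriv g x e := by
  have hfirst : (fun y => fderiv ℝ (fun y => f y + g y) y e) =ᶠ[𝓝 x]
      fun y => fderiv ℝ f y e + fderiv ℝ g y e := by
    filter_upwards [eventually_differentiableAt hf, eventually_differentiableAt hg] with y hfy hgy
    rw [fderiv_fun_add hfy hgy, add_apply]
  rw [secondDirDeriv_eq_of_eventuallyEq hfirst,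
    fderiv_fun_add (differentiableAt_fderiv_apply hf e) (differentiableAt_fderiv_apply hg e)]
  rfl

lemma fderiv_comp_real_apply {G : ℝ → ℝ} {G' : ℝ} {y : E} (hG : HasDerivAt G G' (f y))
    (hf : DifferentiableAt ℝ f y) (e : E) :
    fderiv ℝ (fun z => G (f z)) y e = G' * fderiv ℝ f y e := by
  have hcomp : HasFDerivAt (fun z => G (f z)) _ y := hG.comp_hasFDerivAt y hf.hasFDerivAt
  rw [hcomp.fderiv]
  simp

lemma secondDirDeriv_comp (hf : ContDiffAt ℝ 2 f x) {G G' G'' : ℝ → ℝ}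
    (hG : ∀ s, HasDerivAt G (G' s) s) (hG' : ∀ s, HasDerivAt G' (G'' s) s) (e : E) :
    secondDirDeriv (fun y => G (f y)) x e =
      G'' (f x) * (fderiv ℝ f x e) ^ 2 + G' (f x) * secondDirDeriv f x e := by
  have hfirst : (fun y => fderiv ℝ (fun y => G (f y)) y e) =ᶠ[𝓝 x]
      fun y => G' (f y) * fderiv ℝ f y e := by
    filter_upwards [eventually_differentiableAt hf] with y hy
    exact fderiv_comp_real_apply (hG _) hy e
  have hfx : DifferentiableAt ℝ f x := hf.differentiableAt two_ne_zero
  have houter : DifferentiableAt ℝ (fun y => G' (f y)) x :=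
    (hG' (f x)).differentiableAt.comp x hfx
  rw [secondDirDeriv_eq_of_eventuallyEq hfirst,
    fderiv_fun_mul houter (differentiableAt_fderiv_apply hf e)]
  simp only [add_apply, smul_apply, smul_eq_mul,
    fderiv_comp_real_apply (hG' (f x)) hfx, secondDirDeriv]
  ring

lemma secondDirDeriv_const_mul (hf : ContDiffAt ℝ 2 f x) (c : ℝ) (e : E) :
    secondDirDeriv (fun y => c * f y) x e = c * secondDirDeriv f x e := by
  have hlin : ∀ s, HasDerivAt (fun s : ℝ => c * s) c s := fun s => by
    simpa using (hasDerivAt_id s).const_mul c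
  simpa using secondDirDeriv_comp hf hlin (fun s => hasDerivAt_const s c) e

lemma secondDirDeriv_clm (A : E →L[ℝ] ℝ) (x e : E) : secondDirDeriv (fun y => A y) x e = 0 := by
  simp [secondDirDeriv]

lemma fderiv_comp_fst_apply {p : E × F} (hf : DifferentiableAt ℝ f p.1) (e : E × F) :
    fderiv ℝ (fun q : E × F => f q.1) p e = fderiv ℝ f p.1 e.1 := by
  have hcomp : HasFDerivAt (fun q : E × F => f q.1) _ p := hf.hasFDerivAt.comp p hasFDerivAt_fst
  rw [hcomp.fderiv]
  simp

lemma secondDirDeriv_comp_fst {p : E × F} (hf : ContDiffAt ℝ 2 f p.1) (e : E × F) :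
    secondDirDeriv (fun q : E × F => f q.1) p e = secondDirDeriv f p.1 e.1 := by
  have hfirst : (fun q => fderiv ℝ (fun q : E × F => f q.1) q e) =ᶠ[𝓝 p]
      fun q => fderiv ℝ f q.1 e.1 := by
    filter_upwards [(continuous_fst.tendsto p).eventually (eventually_differentiableAt hf)]
      with q hq
    exact fderiv_comp_fst_apply hq e
  rw [secondDirDeriv_eq_of_eventuallyEq hfirst,
    fderiv_comp_fst_apply (differentiableAt_fderiv_apply hf e.1), secondDirDeriv]

lemma secondDirDeriv_norm_sub_sq {H : Type*} [NormedAddCommGroup H] [InnerProductSpace ℝ H]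
    (c y e : H) : secondDirDeriv (fun z : H => ‖z - c‖ ^ 2) y e = 2 * ‖e‖ ^ 2 := by
  have hfirst : (fun z => fderiv ℝ (fun z : H => ‖z - c‖ ^ 2) z e) =
      fun z => 2 * inner ℝ (z - c) e := by
    funext z
    have hnorm : HasFDerivAt (fun z : H => ‖z - c‖ ^ 2) _ z :=
      ((hasFDerivAt_id (𝕜 := ℝ) z).sub_const c).norm_sq
    rw [hnorm.fderiv]
    simp [inner_sub_left]
  have hsecond : HasFDerivAt (fun z : H => 2 * inner ℝ (z - c) e) _ y :=
    ((hasFDerivAt_id (𝕜 := ℝ) y).sub_const c).inner ℝ (hasFDerivAt_const e y) |>.const_mul 2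
  rw [secondDirDeriv_eq_of_eventuallyEq hfirst.eventuallyEq, hsecond.fderiv]
  simp

lemma deriv_deriv_nonneg_of_isLocalMin {g : ℝ → ℝ} {a : ℝ} (hg : ContinuousAt g a)
    (hmin : IsLocalMin g a) : 0 ≤ deriv (deriv g) a := by
  by_contra! hneg
  have hmax : IsLocalMax g a := isLocalMax_of_deriv_deriv_neg hneg hmin.deriv_eq_zero hg
  have hconst : g =ᶠ[𝓝 a] fun _ => g a := by
    filter_upwards [hmin, hmax] with s hle hge using le_antisymm hge hle
  have hderiv : deriv g =ᶠ[𝓝 a] fun _ => 0 := by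
    filter_upwards [hconst.deriv] with s hs
    rw [hs, deriv_const]
  rw [hderiv.deriv_eq, deriv_const] at hneg
  exact hneg.false

lemma hasDerivAt_add_smul (x e : E) (s : ℝ) : HasDerivAt (fun s : ℝ => x + s • e) e s := by
  simpa using ((hasDerivAt_id s).smul_const e).const_add x

lemma tendsto_add_smul_nhds_zero (x e : E) : Tendsto (fun s : ℝ => x + s • e) (𝓝 0) (𝓝 x) := by
  simpa using (hasDerivAt_add_smul x e 0).continuousAt.tendsto

lemma deriv_deriv_line_eq_secondDirDeriv (hf : ContDiffAt ℝ 2 f x) (e : E) :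
    deriv (deriv fun s : ℝ => f (x + s • e)) 0 = secondDirDeriv f x e := by
  have hfirst : deriv (fun s : ℝ => f (x + s • e)) =ᶠ[𝓝 0] fun s => fderiv ℝ f (x + s • e) e := by
    filter_upwards [(tendsto_add_smul_nhds_zero x e).eventually (eventually_differentiableAt hf)]
      with s hs
    exact (hs.hasFDerivAt.comp_hasDerivAt s (hasDerivAt_add_smul x e s)).deriv
  have hsecond : HasFDerivAt (fun y => fderiv ℝ f y e) (fderiv ℝ (fun y => fderiv ℝ f y e) x)
      (x + (0 : ℝ) • e) := by
    rw [zero_smul, add_zero]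
    exact (differentiableAt_fderiv_apply hf e).hasFDerivAt
  rw [hfirst.deriv_eq]
  exact (hsecond.comp_hasDerivAt 0 (hasDerivAt_add_smul x e 0)).deriv

lemma secondDirDeriv_nonneg_of_isLocalMin (hf : ContDiffAt ℝ 2 f x) (hmin : IsLocalMin f x)
    (e : E) : 0 ≤ secondDirDeriv f x e := by
  rw [← deriv_deriv_line_eq_secondDirDeriv hf]
  have hline := tendsto_add_smul_nhds_zero x e
  refine deriv_deriv_nonneg_of_isLocalMin ?_ ?_
  · rw [ContinuousAt, zero_smul, add_zero]
    exact hf.continuousAt.tendsto.comp hline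
  · filter_upwards [hline.eventually hmin] with s hs
    simpa using hs

end SecondDirDeriv

/-! ### The Laplacian -/

section Laplacian

variable {n : ℕ} {f g : Efull n → ℝ} {x : Efull n}

lemma lapl_eq_sum_secondDirDeriv (n : ℕ) (f : Efull n → ℝ) (x : Efull n) :
    lapl n f x = ∑ α, secondDirDeriv f x (dir n α) := rfl

lemma lapl_congr (h : f =ᶠ[𝓝 x] g) : lapl n f x = lapl n g x :=
  sum_congr rfl fun α _ => secondDirDeriv_congr h (dir n α)

lemma lapl_add (hf : ContDiffAt ℝ 2 f x) (hg : ContDiffAt ℝ 2 g x) :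
    lapl n (fun y => f y + g y) x = lapl n f x + lapl n g x := by
  simp only [lapl_eq_sum_secondDirDeriv, secondDirDeriv_add hf hg, sum_add_distrib]

lemma lapl_comp (hf : ContDiffAt ℝ 2 f x) {G G' G'' : ℝ → ℝ}
    (hG : ∀ s, HasDerivAt G (G' s) s) (hG' : ∀ s, HasDerivAt G' (G'' s) s) :
    lapl n (fun y => G (f y)) x =
      G'' (f x) * ∑ α, (fderiv ℝ f x (dir n α)) ^ 2 + G' (f x) * lapl n f x := by
  simp only [lapl_eq_sum_secondDirDeriv, secondDirDeriv_comp hf hG hG', sum_add_distrib, mul_sum]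

lemma lapl_const_mul (hf : ContDiffAt ℝ 2 f x) (c : ℝ) :
    lapl n (fun y => c * f y) x = c * lapl n f x := by
  simp only [lapl_eq_sum_secondDirDeriv, secondDirDeriv_const_mul hf, mul_sum]

lemma lapl_neg (hf : ContDiffAt ℝ 2 f x) : lapl n (fun y => -f y) x = -lapl n f x := by
  simpa using lapl_const_mul hf (-1)

lemma lapl_add_const (hf : ContDiffAt ℝ 2 f x) (c : ℝ) :
    lapl n (fun y => f y + c) x = lapl n f x := by
  simpa using lapl_comp hf (fun s => (hasDerivAt_id s).add_const c) fun s => hasDerivAt_const s 1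

lemma lapl_comp_fst {φ : Ep n → ℝ} (hφ : ContDiffAt ℝ 2 φ x.1) :
    lapl n (fun y => φ y.1) x = ∑ α, secondDirDeriv φ x.1 (dir n α).1 := by
  simp only [lapl_eq_sum_secondDirDeriv, secondDirDeriv_comp_fst hφ]

lemma lapl_nonneg_of_isLocalMin (hf : ContDiffAt ℝ 2 f x) (hmin : IsLocalMin f x) :
    0 ≤ lapl n f x :=
  sum_nonneg fun α _ => secondDirDeriv_nonneg_of_isLocalMin hf hmin (dir n α)

lemma nonneg_of_lapl_neg {K D : Set (Efull n)} (hK : IsCompact K) (hD : IsOpen D) (hDK : D ⊆ K)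
    (hcont : ContinuousOn f K) (hf : ∀ x ∈ D, ContDiffAt ℝ 2 f x) (hlap : ∀ x ∈ D, lapl n f x < 0)
    (hbdry : ∀ x ∈ K \ D, 0 ≤ f x) : ∀ x ∈ K, 0 ≤ f x := by
  intro x hx
  obtain ⟨z, hz, hmin⟩ := hK.exists_isMinOn ⟨x, hx⟩ hcont
  refine (hbdry z ⟨hz, fun hzD => ?_⟩).trans (hmin hx)
  have hloc : IsLocalMin f z := (hmin.on_subset hDK).isLocalMin (hD.mem_nhds hzD)
  exact (hlap z hzD).not_ge (lapl_nonneg_of_isLocalMin (hf z hzD) hloc)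

end Laplacian

/-! ### The `C²` norm -/

section C2Norm

section General

variable {E F : Type*} [NormedAddCommGroup E] [NormedSpace ℝ E] [NormedAddCommGroup F]
  [NormedSpace ℝ F] {f : E → F} {s : Set E} {y : E}

lemma norm_fderiv_le_norm_fderivWithin (hs : UniqueDiffWithinAt ℝ s y) :
    ‖fderiv ℝ f y‖ ≤ ‖fderivWithin ℝ f s y‖ := by
  by_cases hf : DifferentiableAt ℝ f y
  · rw [hf.fderivWithin hs]
  · rw [fderiv_zero_of_not_differentiableAt hf, norm_zero]
    exact norm_nonneg _

lemma fderivWithin_eq_fderiv_of_continuousAt_fderiv (hy : y ∈ closure (interior s))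
    (hcont : ContinuousWithinAt (fderivWithin ℝ f s) s y)
    (hcont' : ContinuousAt (fderiv ℝ f) y) : fderivWithin ℝ f s y = fderiv ℝ f y := by
  have : (𝓝[interior s] y).NeBot := mem_closure_iff_nhdsWithin_neBot.1 hy
  refine tendsto_nhds_unique (hcont.mono interior_subset)
    ((hcont'.tendsto.mono_left nhdsWithin_le_nhds).congr' ?_)
  filter_upwards [self_mem_nhdsWithin] with z hz
  exact (fderivWithin_of_mem_nhds (mem_interior_iff_mem_nhds.1 hz)).symm

lemma fderivWithin_fderivWithin_eq_fderiv_fderiv (hs : Convex ℝ s) (hne : (interior s).Nonempty)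
    (hf : ContDiffOn ℝ 2 f s) (hy : y ∈ s) (hd : DifferentiableAt ℝ (fderiv ℝ f) y) :
    fderivWithin ℝ (fderivWithin ℝ f s) s y = fderiv ℝ (fderiv ℝ f) y := by
  have hyc : y ∈ closure (interior s) :=
    hs.closure_interior_eq_closure_of_nonempty_interior hne ▸ subset_closure hy
  have hf' : ContDiffOn ℝ 1 (fderivWithin ℝ f s) s :=
    hf.fderivWithin (uniqueDiffOn_convex hs hne) (by norm_num)
  have hwithin := ((hf'.differentiableOn one_ne_zero y hy).hasFDerivWithinAt).mono
    (interior_subset (s := s))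
  have hfull : HasFDerivWithinAt (fderivWithin ℝ f s) (fderiv ℝ (fderiv ℝ f) y) (interior s) y :=
    hd.hasFDerivAt.hasFDerivWithinAt.congr
      (fun z hz => fderivWithin_of_mem_nhds (mem_interior_iff_mem_nhds.1 hz))
      (fderivWithin_eq_fderiv_of_continuousAt_fderiv hyc (hf'.continuousOn y hy) hd.continuousAt)
  have hunique : UniqueDiffWithinAt ℝ (interior s) y :=
    uniqueDiffWithinAt_convex hs.interior (by rwa [interior_interior]) hyc
  exact hunique.eq hwithin hfull

lemma norm_fderiv_fderiv_le_norm_fderivWithin_fderivWithin (hs : Convex ℝ s)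
    (hne : (interior s).Nonempty) (hf : ContDiffOn ℝ 2 f s) (hy : y ∈ s) :
    ‖fderiv ℝ (fderiv ℝ f) y‖ ≤ ‖fderivWithin ℝ (fderivWithin ℝ f s) s y‖ := by
  by_cases hd : DifferentiableAt ℝ (fderiv ℝ f) y
  · rw [fderivWithin_fderivWithin_eq_fderiv_fderiv hs hne hf hy hd]
  · rw [fderiv_zero_of_not_differentiableAt hd]
    exact (norm_zero (E := E →L[ℝ] E →L[ℝ] F)).trans_le
      (norm_nonneg (E := E →L[ℝ] E →L[ℝ] F) _)

lemma exists_norm_add_norm_fderiv_add_norm_fderiv_fderiv_le (hcompact : IsCompact s)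
    (hs : Convex ℝ s) (hne : (interior s).Nonempty) (hf : ContDiffOn ℝ 2 f s) :
    ∃ B, ∀ y ∈ s, ‖f y‖ + ‖fderiv ℝ f y‖ + ‖fderiv ℝ (fderiv ℝ f) y‖ ≤ B := by
  have hus : UniqueDiffOn ℝ s := uniqueDiffOn_convex hs hne
  have hf' : ContDiffOn ℝ 1 (fderivWithin ℝ f s) s := hf.fderivWithin hus (by norm_num)
  obtain ⟨B₀, hB₀⟩ := hcompact.exists_bound_of_continuousOn hf.continuousOn
  obtain ⟨B₁, hB₁⟩ := hcompact.exists_bound_of_continuousOn hf'.continuousOn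
  obtain ⟨B₂, hB₂⟩ := hcompact.exists_bound_of_continuousOn (E := E →L[ℝ] E →L[ℝ] F)
    (hf'.continuousOn_fderivWithin hus le_rfl)
  refine ⟨B₀ + B₁ + B₂, fun y hy => add_le_add (add_le_add (hB₀ y hy) ?_) ?_⟩
  · exact (norm_fderiv_le_norm_fderivWithin (hus y hy)).trans (hB₁ y hy)
  · exact (norm_fderiv_fderiv_le_norm_fderivWithin_fderivWithin hs hne hf hy).trans (hB₂ y hy)

end General

variable {n : ℕ} {f : Ep n → ℝ} {M : ℝ} {y z : Ep n}

lemma C2norm_nonneg (f : Ep n → ℝ) : 0 ≤ C2norm n f :=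
  Real.iSup_nonneg fun _ => by positivity

lemma norm_add_norm_fderiv_add_norm_fderiv_fderiv_le_C2norm
    (hf : ContDiffOn ℝ 2 f (closedBall 0 1)) (hy : ‖y‖ ≤ 1) :
    ‖f y‖ + ‖fderiv ℝ f y‖ + ‖fderiv ℝ (fderiv ℝ f) y‖ ≤ C2norm n f := by
  obtain ⟨B, hB⟩ := exists_norm_add_norm_fderiv_add_norm_fderiv_fderiv_le
    (isCompact_closedBall (0 : Ep n) 1) (convex_closedBall 0 1)
    ⟨0, ball_subset_interior_closedBall (by simp)⟩ hf
  have hbdd : BddAbove (Set.range fun y : closedBall (0 : Ep n) 1 =>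
      ‖f (y : Ep n)‖ + ‖fderiv ℝ f (y : Ep n)‖ + ‖fderiv ℝ (fderiv ℝ f) (y : Ep n)‖) :=
    ⟨B, by rintro _ ⟨y, rfl⟩; exact hB y y.2⟩
  exact le_ciSup hbdd (⟨y, by simpa using hy⟩ : closedBall (0 : Ep n) 1)

/-- `f` is `C²` on the open unit ball, continuous on the closed one, and `f`, `∇f`, `∇²f` are
bounded by `M`. This is what a bound `‖f‖_{C²} ≤ M` provides; unlike the norm itself, it avoids
`fderiv` at boundary points of the ball. -/
structure C2BoundedBy (n : ℕ) (f : Ep n → ℝ) (M : ℝ) : Prop where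
  contDiffAt : ∀ y : Ep n, ‖y‖ < 1 → ContDiffAt ℝ 2 f y
  continuousOn : ContinuousOn f (closedBall 0 1)
  abs_le : ∀ y : Ep n, ‖y‖ ≤ 1 → |f y| ≤ M
  norm_fderiv_le : ∀ y : Ep n, ‖y‖ < 1 → ‖fderiv ℝ f y‖ ≤ M
  norm_fderiv_fderiv_le : ∀ y : Ep n, ‖y‖ < 1 → ‖fderiv ℝ (fderiv ℝ f) y‖ ≤ M

namespace C2BoundedBy

lemma of_C2norm_le (hf : ContDiffOn ℝ 2 f (closedBall 0 1)) (hM : C2norm n f ≤ M) :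
    C2BoundedBy n f M where
  contDiffAt y hy := hf.contDiffAt (closedBall_mem_nhds_of_mem (by simpa using hy))
  continuousOn := hf.continuousOn
  abs_le y hy := by
    have hsum := norm_add_norm_fderiv_add_norm_fderiv_fderiv_le_C2norm hf hy
    rw [← Real.norm_eq_abs]
    linarith [norm_nonneg (fderiv ℝ f y), norm_nonneg (fderiv ℝ (fderiv ℝ f) y)]
  norm_fderiv_le y hy := by
    have hsum := norm_add_norm_fderiv_add_norm_fderiv_fderiv_le_C2norm hf hy.le
    linarith [norm_nonneg (f y), norm_nonneg (fderiv ℝ (fderiv ℝ f) y)]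
  norm_fderiv_fderiv_le y hy := by
    have hsum := norm_add_norm_fderiv_add_norm_fderiv_fderiv_le_C2norm hf hy.le
    linarith [norm_nonneg (f y), norm_nonneg (fderiv ℝ f y)]

lemma abs_sub_le (hf : C2BoundedBy n f M) (hy : ‖y‖ < 1) (hz : ‖z‖ < 1) :
    |f y - f z| ≤ M * ‖y - z‖ :=
  (convex_ball (0 : Ep n) 1).norm_image_sub_le_of_norm_fderiv_le (𝕜 := ℝ)
    (fun x hx => (hf.contDiffAt x (by simpa using hx)).differentiableAt two_ne_zero)
    (fun x hx => hf.norm_fderiv_le x (by simpa using hx)) (by simpa using hz) (by simpa using hy)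

lemma neg (hf : C2BoundedBy n f M) : C2BoundedBy n (fun y => -f y) M where
  contDiffAt y hy := (hf.contDiffAt y hy).neg
  continuousOn := hf.continuousOn.neg
  abs_le y hy := by simpa using hf.abs_le y hy
  norm_fderiv_le y hy := by simpa using hf.norm_fderiv_le y hy
  norm_fderiv_fderiv_le y hy := by
    have hfirst : fderiv ℝ (fun y => -f y) = fun y => -fderiv ℝ f y :=
      funext fun z => fderiv_fun_neg
    rw [hfirst, fderiv_fun_neg]
    exact (norm_neg (E := Ep n →L[ℝ] Ep n →L[ℝ] ℝ) _).trans_le (hf.norm_fderiv_fderiv_le y hy)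

lemma abs_secondDirDeriv_le (hf : C2BoundedBy n f M) (hy : ‖y‖ < 1) {e : Ep n} (he : ‖e‖ ≤ 1) :
    |secondDirDeriv f y e| ≤ M := by
  have hM : 0 ≤ M := (norm_nonneg _).trans (hf.norm_fderiv_le y hy)
  rw [secondDirDeriv_eq_fderiv_fderiv (hf.contDiffAt y hy), ← Real.norm_eq_abs]
  calc ‖fderiv ℝ (fderiv ℝ f) y e e‖
      ≤ ‖fderiv ℝ (fderiv ℝ f) y‖ * ‖e‖ * ‖e‖ := ContinuousLinearMap.le_opNorm₂ _ _ _
    _ ≤ M * 1 * 1 := by gcongr; exact hf.norm_fderiv_fderiv_le y hy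
    _ = M := by ring

end C2BoundedBy

end C2Norm

/-! ### The coordinate frame -/

section Frame

variable {n : ℕ}

lemma norm_dir_fst_le_one (α : Fin n) : ‖(dir n α).1‖ ≤ 1 := by
  unfold dir
  split_ifs <;> simp

lemma exists_dir_eq_vertical [NeZero n] : ∃ α : Fin n, dir n α = (0, 1) :=
  ⟨⟨n - 1, Nat.sub_lt (NeZero.pos n) one_pos⟩, by simp [dir]⟩

/-- The coordinate of `y` along the direction `dir n α`. -/
def dirCoord (n : ℕ) (y : Efull n) (α : Fin n) : ℝ :=
  if h : (α : ℕ) < n - 1 then y.1 ⟨α, h⟩ else y.2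

lemma continuous_dirCoord (α : Fin n) : Continuous fun y => dirCoord n y α := by
  unfold dirCoord
  split_ifs <;> fun_prop

lemma sum_dirCoord_smul_dir [NeZero n] (y : Efull n) : ∑ α, dirCoord n y α • dir n α = y := by
  obtain ⟨m, rfl⟩ := Nat.exists_eq_succ_of_ne_zero (NeZero.ne n)
  have hhorizontal (i : Fin m) : dirCoord (m + 1) y i.castSucc • dir (m + 1) i.castSucc =
      (y.1 i • (EuclideanSpace.single i (1 : ℝ) : Ep (m + 1)), (0 : ℝ)) := by
    simp [dirCoord, dir]
  have hvertical : dirCoord (m + 1) y (Fin.last m) • dir (m + 1) (Fin.last m) =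
      ((0 : Ep (m + 1)), y.2) := by
    simp [dirCoord, dir]
  have hsum : ∑ i, y.1 i • (EuclideanSpace.single i (1 : ℝ) : Ep (m + 1)) = y.1 := by
    simpa using (EuclideanSpace.basisFun (Fin m) ℝ).sum_repr y.1
  rw [Fin.sum_univ_castSucc, hvertical, sum_congr rfl fun i _ => hhorizontal i]
  exact Prod.ext (by simpa [Prod.fst_sum] using hsum) (by simp [Prod.snd_sum])

lemma apply_eq_sum_dirCoord_mul [NeZero n] (A : Efull n →L[ℝ] ℝ) (y : Efull n) :
    A y = ∑ α, dirCoord n y α * A (dir n α) := by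
  conv_lhs => rw [← sum_dirCoord_smul_dir y]
  simp

/-- The squared Euclidean norm on `ℝ^{n-1} × ℝ`, whose product norm is a maximum norm. -/
def euclideanSq (n : ℕ) (y : Efull n) : ℝ := ‖y.1‖ ^ 2 + y.2 ^ 2

lemma contDiff_euclideanSq (n : ℕ) : ContDiff ℝ 2 (euclideanSq n) :=
  (contDiff_fst.norm_sq ℝ).add (contDiff_snd.pow 2)

lemma fderiv_euclideanSq_apply (y e : Efull n) :
    fderiv ℝ (euclideanSq n) y e = 2 * (inner ℝ y.1 e.1 + y.2 * e.2) := by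
  have hderiv : HasFDerivAt (euclideanSq n) _ y :=
    (hasFDerivAt_fst (𝕜 := ℝ) (p := y)).norm_sq.add ((hasFDerivAt_snd (𝕜 := ℝ) (p := y)).pow 2)
  rw [hderiv.fderiv]
  simp
  ring

lemma fderiv_euclideanSq_dir (y : Efull n) (α : Fin n) :
    fderiv ℝ (euclideanSq n) y (dir n α) = 2 * dirCoord n y α := by
  rw [fderiv_euclideanSq_apply]
  unfold dir dirCoord
  split_ifs <;> simp [EuclideanSpace.inner_single_right]

lemma norm_lt_one_of_euclideanSq_lt_one {y : Efull n} (hy : euclideanSq n y < 1) : ‖y‖ < 1 := by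
  unfold euclideanSq at hy
  rw [Prod.norm_def, max_lt_iff, Real.norm_eq_abs, ← sq_lt_one_iff₀ (norm_nonneg y.1),
    ← sq_lt_one_iff₀ (abs_nonneg y.2), sq_abs]
  constructor <;> linarith [sq_nonneg y.2, sq_nonneg ‖y.1‖]

instance volume_isAddHaarMeasure (n : ℕ) : (volume : Measure (Efull n)).IsAddHaarMeasure :=
  inferInstanceAs (Measure.IsAddHaarMeasure
    ((volume : Measure (Ep n)).prod (volume : Measure ℝ)))

end Frame

/-! ### Weighted mean values -/

lemma hasDerivAt_comp_max_zero {F F' : ℝ → ℝ} (hF : ∀ s, 0 ≤ s → HasDerivAt F (F' s) s)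
    (hF' : F' 0 = 0) (s : ℝ) : HasDerivAt (fun s => F (max s 0)) (F' (max s 0)) s := by
  rcases lt_trichotomy s 0 with hs | rfl | hs
  · rw [max_eq_right hs.le, hF']
    refine (hasDerivAt_const s (F 0)).congr_of_eventuallyEq ?_
    filter_upwards [gt_mem_nhds hs] with t ht
    rw [max_eq_right ht.le]
  · rw [max_self, hF', ← hasDerivWithinAt_univ, ← Set.Iic_union_Ici (a := (0 : ℝ))]
    refine HasDerivWithinAt.union ?_ ?_
    · exact (hasDerivWithinAt_const 0 _ (F 0)).congr
        (fun t ht => by rw [max_eq_right (Set.mem_Iic.1 ht)]) (by rw [max_self])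
    · exact (hF' ▸ hF 0 le_rfl).hasDerivWithinAt.congr
        (fun t ht => by rw [max_eq_left (Set.mem_Ici.1 ht)]) (by rw [max_self])
  · rw [max_eq_left hs.le]
    refine (hF s hs.le).congr_of_eventuallyEq ?_
    filter_upwards [lt_mem_nhds hs] with t ht
    rw [max_eq_left ht.le]

section MeanWeight

variable {n : ℕ}

/-- The radial weight `ρ(y) = (1 - |y|²)₊` against which mean values are taken. -/
def meanWeight (n : ℕ) (y : Efull n) : ℝ := max (1 - euclideanSq n y) 0

/-- The potential `ρ² / 4` of the weight `ρ`, characterised by `∇(ρ² / 4) = -ρ y`. -/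
def meanPotential (n : ℕ) (y : Efull n) : ℝ := meanWeight n y ^ 2 / 4

lemma continuous_meanWeight (n : ℕ) : Continuous (meanWeight n) :=
  (continuous_const.sub (contDiff_euclideanSq n).continuous).max continuous_const

lemma continuous_meanPotential (n : ℕ) : Continuous (meanPotential n) :=
  ((continuous_meanWeight n).pow 2).div_const 4

lemma meanWeight_nonneg (y : Efull n) : 0 ≤ meanWeight n y := le_max_right _ _

lemma meanWeight_le_one (y : Efull n) : meanWeight n y ≤ 1 :=
  max_le (sub_le_self _ (by unfold euclideanSq; positivity)) zero_le_one

lemma norm_lt_one_of_meanWeight_ne_zero {y : Efull n} (hy : meanWeight n y ≠ 0) : ‖y‖ < 1 :=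
  norm_lt_one_of_euclideanSq_lt_one <| by
    by_contra! hge
    exact hy (max_eq_right (by linarith))

lemma meanWeight_eq_zero {y : Efull n} (hy : 1 ≤ ‖y‖) : meanWeight n y = 0 :=
  of_not_not fun hne => (norm_lt_one_of_meanWeight_ne_zero hne).not_ge hy

lemma hasCompactSupport_meanWeight (n : ℕ) : HasCompactSupport (meanWeight n) :=
  HasCompactSupport.intro (isCompact_closedBall (0 : Efull n) 1) fun y hy =>
    meanWeight_eq_zero (by simpa using (not_le.1 (mt mem_closedBall_zero_iff.2 hy)).le)

lemma integrable_meanWeight_mul {g : Efull n → ℝ} (hg : Continuous g) :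
    Integrable fun y => meanWeight n y * g y :=
  ((continuous_meanWeight n).mul hg).integrable_of_hasCompactSupport
    (hasCompactSupport_meanWeight n).mul_right

lemma integrable_meanPotential_mul {g : Efull n → ℝ} (hg : Continuous g) :
    Integrable fun y => meanPotential n y * g y :=
  ((continuous_meanPotential n).mul hg).integrable_of_hasCompactSupport <|
    ((hasCompactSupport_meanWeight n).comp_left (g := fun t : ℝ => t ^ 2 / 4) (by simp)).mul_right

lemma integral_meanWeight_pos (n : ℕ) : 0 < ∫ y, meanWeight n y :=
  (continuous_meanWeight n).integral_pos_of_hasCompactSupport_nonneg_nonzero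
    (hasCompactSupport_meanWeight n) meanWeight_nonneg (x := 0) (by simp [meanWeight, euclideanSq])

lemma hasFDerivAt_meanPotential (y : Efull n) :
    HasFDerivAt (meanPotential n) (-((meanWeight n y / 2) • fderiv ℝ (euclideanSq n) y)) y := by
  have hinner : HasFDerivAt (fun y => 1 - euclideanSq n y) (-fderiv ℝ (euclideanSq n) y) y :=
    ((contDiff_euclideanSq n).differentiable two_ne_zero y).hasFDerivAt.const_sub 1
  have hsq (s : ℝ) : HasDerivAt (fun s : ℝ => s ^ 2 / 4) (s / 2) s := by
    refine ((hasDerivAt_pow 2 s).div_const 4).congr_deriv ?_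
    norm_num
    ring
  refine HasFDerivAt.congr_fderiv ?_ (smul_neg (meanWeight n y / 2) _)
  exact (hasDerivAt_comp_max_zero (fun s _ => hsq s) (by norm_num) _).comp_hasFDerivAt y hinner

lemma fderiv_meanPotential_dir (y : Efull n) (α : Fin n) :
    fderiv ℝ (meanPotential n) y (dir n α) = -(meanWeight n y * dirCoord n y α) := by
  rw [(hasFDerivAt_meanPotential y).fderiv, neg_apply, smul_apply,
    fderiv_euclideanSq_dir, smul_eq_mul]
  ring

lemma integral_meanPotential_mul_fderiv_dir {g : Efull n → ℝ} (hg : ContDiff ℝ 1 g) (α : Fin n) :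
    ∫ y, meanPotential n y * fderiv ℝ g y (dir n α) =
      ∫ y, meanWeight n y * (dirCoord n y α * g y) := by
  have hg' : Continuous fun y => fderiv ℝ g y (dir n α) :=
    (hg.continuous_fderiv one_ne_zero).clm_apply continuous_const
  have hflux (y : Efull n) : fderiv ℝ (meanPotential n) y (dir n α) * g y =
      -(meanWeight n y * (dirCoord n y α * g y)) := by
    rw [fderiv_meanPotential_dir]
    ring
  have hparts := integral_mul_fderiv_eq_neg_fderiv_mul_of_integrable (μ := volume)
    (f := meanPotential n) (g := g) (v := dir n α)
    (by simpa only [hflux] using! (integrable_meanWeight_mul (g := fun y => dirCoord n y α * g y)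
      ((continuous_dirCoord α).mul hg.continuous)).neg)
    (integrable_meanPotential_mul hg') (integrable_meanPotential_mul hg.continuous)
    (fun y _ => (hasFDerivAt_meanPotential y).differentiableAt)
    (fun y _ => hg.differentiable one_ne_zero y)
  simpa only [hflux, integral_neg, neg_neg] using hparts

end MeanWeight

section MeanValue

variable {n : ℕ} {f : Efull n → ℝ}

lemma fderiv_fderiv_comp_add_smul_apply (hf : ContDiff ℝ 2 f) (x₀ y e : Efull n) (r : ℝ) :
    fderiv ℝ (fun y => fderiv ℝ f (x₀ + r • y) e) y e = r * secondDirDeriv f (x₀ + r • y) e := by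
  have hscale : HasFDerivAt (fun y : Efull n => x₀ + r • y) (r • ContinuousLinearMap.id ℝ _) y :=
    ((hasFDerivAt_id y).const_smul r).const_add x₀
  have hcomp : HasFDerivAt (fun y => fderiv ℝ f (x₀ + r • y) e) _ y :=
    ((differentiableAt_fderiv_apply hf.contDiffAt e).hasFDerivAt).comp y hscale
  rw [hcomp.fderiv]
  simp [secondDirDeriv]

-- The left-hand side is the derivative at `r` of the weighted mean `∫ ρ(y) f(x₀ + r y) dy`.
lemma integral_meanWeight_mul_fderiv_eq [NeZero n] (hf : ContDiff ℝ 2 f) (x₀ : Efull n) (r : ℝ) :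
    ∫ y, meanWeight n y * fderiv ℝ f (x₀ + r • y) y =
      r * ∫ y, meanPotential n y * lapl n f (x₀ + r • y) := by
  have hpartial (α : Fin n) : ContDiff ℝ 1 fun y => fderiv ℝ f (x₀ + r • y) (dir n α) :=
    ((hf.fderiv_right (m := 1) (by norm_num)).comp (by fun_prop)).clm_apply contDiff_const
  have hsecond (α : Fin n) : Continuous fun y =>
      fderiv ℝ (fun y => fderiv ℝ f (x₀ + r • y) (dir n α)) y (dir n α) :=
    ((hpartial α).continuous_fderiv one_ne_zero).clm_apply continuous_const
  calc ∫ y, meanWeight n y * fderiv ℝ f (x₀ + r • y) y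
      = ∫ y, ∑ α, meanWeight n y * (dirCoord n y α * fderiv ℝ f (x₀ + r • y) (dir n α)) :=
        integral_congr_ae <| .of_forall fun y => by
          simp only [apply_eq_sum_dirCoord_mul (fderiv ℝ f (x₀ + r • y)) y, mul_sum]
    _ = ∑ α, ∫ y, meanWeight n y * (dirCoord n y α * fderiv ℝ f (x₀ + r • y) (dir n α)) :=
        integral_finsetSum _ fun α _ =>
          integrable_meanWeight_mul ((continuous_dirCoord α).mul (hpartial α).continuous)
    _ = ∑ α, ∫ y, meanPotential n y *
          fderiv ℝ (fun y => fderiv ℝ f (x₀ + r • y) (dir n α)) y (dir n α) :=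
        sum_congr rfl fun α _ => (integral_meanPotential_mul_fderiv_dir (hpartial α) α).symm
    _ = ∫ y, ∑ α, meanPotential n y *
          fderiv ℝ (fun y => fderiv ℝ f (x₀ + r • y) (dir n α)) y (dir n α) :=
        (integral_finsetSum _ fun α _ => integrable_meanPotential_mul (hsecond α)).symm
    _ = ∫ y, r * (meanPotential n y * lapl n f (x₀ + r • y)) :=
        integral_congr_ae <| .of_forall fun y => by
          simp only [fderiv_fderiv_comp_add_smul_apply hf, lapl_eq_sum_secondDirDeriv, mul_sum]
          exact sum_congr rfl fun α _ => mul_left_comm _ _ _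
    _ = r * ∫ y, meanPotential n y * lapl n f (x₀ + r • y) := integral_const_mul _ _

lemma hasDerivAt_integral_meanWeight_mul (hf : ContDiff ℝ 1 f) (x₀ : Efull n) (r : ℝ) :
    HasDerivAt (fun r : ℝ => ∫ y, meanWeight n y * f (x₀ + r • y))
      (∫ y, meanWeight n y * fderiv ℝ f (x₀ + r • y) y) r := by
  have hderiv_cont : Continuous fun p : ℝ × Efull n => fderiv ℝ f (x₀ + p.1 • p.2) p.2 :=
    ((hf.continuous_fderiv one_ne_zero).comp (by fun_prop)).clm_apply continuous_snd
  obtain ⟨B, hB⟩ := ((isCompact_closedBall r 1).prod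
    (isCompact_closedBall (0 : Efull n) 1)).exists_bound_of_continuousOn hderiv_cont.continuousOn
  have hderiv (y : Efull n) (t : ℝ) : HasDerivAt (fun t : ℝ => meanWeight n y * f (x₀ + t • y))
      (meanWeight n y * fderiv ℝ f (x₀ + t • y) y) t :=
    (((hf.differentiable one_ne_zero _).hasFDerivAt).comp_hasDerivAt t
      (hasDerivAt_add_smul x₀ y t)).const_mul _
  have hbound (y : Efull n) (t : ℝ) (ht : t ∈ closedBall r 1) :
      ‖meanWeight n y * fderiv ℝ f (x₀ + t • y) y‖ ≤ meanWeight n y * B := by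
    rw [norm_mul, Real.norm_of_nonneg (meanWeight_nonneg y)]
    by_cases hy : meanWeight n y = 0
    · simp [hy]
    · exact mul_le_mul_of_nonneg_left
        (hB (t, y) ⟨ht, by simpa using (norm_lt_one_of_meanWeight_ne_zero hy).le⟩)
        (meanWeight_nonneg y)
  have hinteg (t : ℝ) : Integrable fun y => meanWeight n y * f (x₀ + t • y) :=
    integrable_meanWeight_mul (hf.continuous.comp (by fun_prop))
  have hinteg' : Integrable fun y => meanWeight n y * fderiv ℝ f (x₀ + r • y) y :=
    integrable_meanWeight_mul (hderiv_cont.comp (by fun_prop : Continuous fun y => (r, y)))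
  exact (hasDerivAt_integral_of_dominated_loc_of_deriv_le (closedBall_mem_nhds r one_pos)
    (.of_forall fun t => (hinteg t).aestronglyMeasurable) (hinteg r) hinteg'.aestronglyMeasurable
    (.of_forall hbound) (integrable_meanWeight_mul continuous_const)
    (.of_forall fun y t _ => hderiv y t)).2

lemma add_smul_mem_ball {x₀ y : Efull n} {r R : ℝ} (hr : 0 < r) (hrR : r ≤ R)
    (hy : meanWeight n y ≠ 0) : x₀ + r • y ∈ ball x₀ R := by
  rw [mem_ball, dist_eq_norm, add_sub_cancel_left, norm_smul, Real.norm_of_nonneg hr.le]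
  exact (mul_lt_of_lt_one_right hr (norm_lt_one_of_meanWeight_ne_zero hy)).trans_le hrR

lemma integral_meanWeight_mul_le_of_contDiff [NeZero n] (hf : ContDiff ℝ 2 f) {x₀ : Efull n}
    {R : ℝ} (hR : 0 < R) (hsub : ∀ x ∈ ball x₀ R, 0 ≤ lapl n f x) :
    (∫ y, meanWeight n y) * f x₀ ≤ ∫ y, meanWeight n y * f (x₀ + R • y) := by
  have hderiv := hasDerivAt_integral_meanWeight_mul (hf.of_le one_le_two) x₀
  have hmono : MonotoneOn (fun r : ℝ => ∫ y, meanWeight n y * f (x₀ + r • y)) (Set.Icc 0 R) := by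
    refine monotoneOn_of_deriv_nonneg (convex_Icc 0 R)
      (fun r _ => (hderiv r).continuousAt.continuousWithinAt)
      (fun r _ => (hderiv r).differentiableAt.differentiableWithinAt) fun r hr => ?_
    rw [interior_Icc] at hr
    rw [(hderiv r).deriv, integral_meanWeight_mul_fderiv_eq hf]
    refine mul_nonneg hr.1.le (integral_nonneg fun y => ?_)
    by_cases hy : meanWeight n y = 0
    · simp [meanPotential, hy]
    · exact mul_nonneg (by unfold meanPotential; positivity)
        (hsub _ (add_smul_mem_ball hr.1 hr.2.le hy))
  simpa [integral_mul_const] using hmono ⟨le_rfl, hR.le⟩ ⟨hR.le, le_rfl⟩ hR.le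

end MeanValue

section LocalMeanValue

lemma exists_contDiff_eqOn_closedBall {E : Type*} [NormedAddCommGroup E] [NormedSpace ℝ E]
    [HasContDiffBump E] {f : E → ℝ} {x₀ : E} {r R : ℝ} (hr : 0 < r) (hrR : r < R)
    (hf : ∀ x ∈ ball x₀ R, ContDiffAt ℝ 2 f x) :
    ∃ F : E → ℝ, ContDiff ℝ 2 F ∧ Set.EqOn F f (closedBall x₀ r) := by
  let χ : ContDiffBump x₀ := ⟨r, (r + R) / 2, hr, by linarith⟩
  refine ⟨fun x => χ x * f x, contDiff_iff_contDiffAt.2 fun x => ?_, fun x hx => ?_⟩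
  · by_cases hx : x ∈ ball x₀ R
    · exact χ.contDiffAt.mul (hf x hx)
    · have hx' : x ∈ (closedBall x₀ ((r + R) / 2))ᶜ :=
        fun hmem => hx (closedBall_subset_ball (by linarith) hmem)
      refine (contDiffAt_const (c := (0 : ℝ))).congr_of_eventuallyEq ?_
      filter_upwards [isClosed_closedBall.isOpen_compl.mem_nhds hx'] with y hy
      rw [χ.zero_of_le_dist (not_le.1 (mt mem_closedBall.2 hy)).le, zero_mul]
  · simp only [χ.one_of_mem_closedBall hx, one_mul]

variable {n : ℕ} {f F : Efull n → ℝ} {x₀ z : Efull n} {r R S c : ℝ}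

lemma lapl_eq_of_eqOn_closedBall (hF : Set.EqOn F f (closedBall x₀ r)) {x : Efull n}
    (hx : x ∈ ball x₀ r) : lapl n F x = lapl n f x :=
  lapl_congr <| (hF.mono ball_subset_closedBall).eventuallyEq_of_mem (isOpen_ball.mem_nhds hx)

lemma integral_meanWeight_mul_le [NeZero n] (hr : 0 < r) (hrR : r < R)
    (hf : ∀ x ∈ ball x₀ R, ContDiffAt ℝ 2 f x) (hsub : ∀ x ∈ ball x₀ r, 0 ≤ lapl n f x) :
    (∫ y, meanWeight n y) * f x₀ ≤ ∫ y, meanWeight n y * f (x₀ + r • y) := by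
  obtain ⟨F, hF, hFf⟩ := exists_contDiff_eqOn_closedBall hr hrR hf
  calc (∫ y, meanWeight n y) * f x₀
      = (∫ y, meanWeight n y) * F x₀ := by rw [hFf (mem_closedBall_self hr.le)]
    _ ≤ ∫ y, meanWeight n y * F (x₀ + r • y) :=
        integral_meanWeight_mul_le_of_contDiff hF hr fun x hx => by
          rw [lapl_eq_of_eqOn_closedBall hFf hx]
          exact hsub x hx
    _ = ∫ y, meanWeight n y * f (x₀ + r • y) := integral_congr_ae <| .of_forall fun y => by
        by_cases hy : meanWeight n y = 0
        · simp [hy]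
        · simp only [hFf (ball_subset_closedBall (add_smul_mem_ball hr le_rfl hy))]

/-! ### The interior gradient estimate -/

lemma integral_meanWeight_mul_eq_of_lapl_eq_zero [NeZero n] (hF : ContDiff ℝ 2 F) (hR : 0 < R)
    (hharm : ∀ x ∈ ball z R, lapl n F x = 0) :
    (∫ y, meanWeight n y) * F z = ∫ y, meanWeight n y * F (z + R • y) := by
  refine le_antisymm
    (integral_meanWeight_mul_le_of_contDiff hF hR fun x hx => (hharm x hx).ge) ?_
  have hneg := integral_meanWeight_mul_le_of_contDiff hF.neg hR fun x hx =>
    ((lapl_neg hF.contDiffAt).trans (by rw [hharm x hx, neg_zero])).ge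
  simp only [mul_neg, integral_neg] at hneg
  linarith

lemma abs_norm_sub_sq_sub_norm_sq_le {E : Type*} [SeminormedAddCommGroup E] (a b : E) :
    |‖a - b‖ ^ 2 - ‖a‖ ^ 2| ≤ (2 * ‖a‖ + ‖b‖) * ‖b‖ := by
  have hdiff : |‖a - b‖ - ‖a‖| ≤ ‖b‖ := by simpa using abs_norm_sub_norm_le (a - b) a
  rw [sq_sub_sq, abs_mul, abs_of_nonneg (by positivity)]
  exact mul_le_mul (by linarith [norm_sub_le a b]) hdiff (abs_nonneg _) (by positivity)

lemma abs_meanWeight_sub_sub_le (y k : Efull n) :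
    |meanWeight n (y - k) - meanWeight n y| ≤ 2 * (2 * ‖y‖ + ‖k‖) * ‖k‖ := by
  have hhorizontal : |‖y.1 - k.1‖ ^ 2 - ‖y.1‖ ^ 2| ≤ (2 * ‖y‖ + ‖k‖) * ‖k‖ :=
    (abs_norm_sub_sq_sub_norm_sq_le y.1 k.1).trans (by gcongr <;> exact norm_fst_le _)
  have hvertical : |(y.2 - k.2) ^ 2 - y.2 ^ 2| ≤ (2 * ‖y‖ + ‖k‖) * ‖k‖ := by
    simpa using (abs_norm_sub_sq_sub_norm_sq_le y.2 k.2).trans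
      (by gcongr <;> exact norm_snd_le _)
  calc |meanWeight n (y - k) - meanWeight n y|
      ≤ |1 - euclideanSq n (y - k) - (1 - euclideanSq n y)| := abs_max_sub_max_le_abs _ _ _
    _ = |(‖y.1 - k.1‖ ^ 2 - ‖y.1‖ ^ 2) + ((y.2 - k.2) ^ 2 - y.2 ^ 2)| := by
        rw [← abs_neg]
        congr 1
        simp only [euclideanSq, Prod.fst_sub, Prod.snd_sub]
        ring
    _ ≤ (2 * ‖y‖ + ‖k‖) * ‖k‖ + (2 * ‖y‖ + ‖k‖) * ‖k‖ :=
        (abs_add_le _ _).trans (add_le_add hhorizontal hvertical)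
    _ = 2 * (2 * ‖y‖ + ‖k‖) * ‖k‖ := by ring

lemma abs_meanWeight_sub_sub_le_indicator {y k : Efull n} (hk : ‖k‖ ≤ 1) :
    |meanWeight n (y - k) - meanWeight n y| ≤
      (ball (0 : Efull n) 2).indicator (fun _ => 10 * ‖k‖) y := by
  by_cases hy : ‖y‖ < 2
  · rw [Set.indicator_of_mem (mem_ball_zero_iff.2 hy)]
    refine (abs_meanWeight_sub_sub_le y k).trans ?_
    gcongr
    linarith
  · have hyk : 1 ≤ ‖y - k‖ := by linarith [norm_sub_norm_le y k]
    rw [Set.indicator_of_notMem (by simpa using hy), meanWeight_eq_zero hyk,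
      meanWeight_eq_zero (by linarith), sub_zero, abs_zero]

-- Translating the mean value formula at `z` to `x₀` moves the increment of `F` onto the weight.
lemma integral_meanWeight_mul_sub_eq [NeZero n] (hF : ContDiff ℝ 2 F) (hR : 0 < R)
    (hharm : ∀ x ∈ ball x₀ (2 * R), lapl n F x = 0) (hz : z ∈ ball x₀ R) :
    (∫ y, meanWeight n y) * (F z - F x₀) =
      ∫ y, (meanWeight n (y - R⁻¹ • (z - x₀)) - meanWeight n y) * F (x₀ + R • y) := by
  set k : Efull n := R⁻¹ • (z - x₀)
  have hball : ball z R ⊆ ball x₀ (2 * R) := ball_subset_ball' (by rw [mem_ball] at hz; linarith)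
  have hcont : Continuous fun y : Efull n => F (x₀ + R • y) := hF.continuous.comp (by fun_prop)
  have hshift : ∫ y, meanWeight n y * F (z + R • y) =
      ∫ y, meanWeight n (y - k) * F (x₀ + R • y) := by
    rw [← integral_sub_right_eq_self (fun y => meanWeight n y * F (z + R • y)) k]
    refine integral_congr_ae (.of_forall fun y => ?_)
    have hpoint : z + R • (y - k) = x₀ + R • y := by
      rw [smul_sub, smul_smul, mul_inv_cancel₀ hR.ne', one_smul]
      abel
    simp only [hpoint]
  have hinteg : Integrable fun y => meanWeight n (y - k) * F (x₀ + R • y) :=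
    (((continuous_meanWeight n).comp (by fun_prop)).mul hcont).integrable_of_hasCompactSupport
      ((hasCompactSupport_meanWeight n).comp_homeomorph (Homeomorph.subRight k)).mul_right
  rw [mul_sub, integral_meanWeight_mul_eq_of_lapl_eq_zero hF hR fun x hx => hharm x (hball hx),
    integral_meanWeight_mul_eq_of_lapl_eq_zero hF hR fun x hx =>
      hharm x (ball_subset_ball (by linarith) hx),
    hshift, ← integral_sub hinteg (integrable_meanWeight_mul hcont)]
  simp only [sub_mul]

lemma integral_meanWeight_mul_abs_sub_le [NeZero n] (hF : ContDiff ℝ 2 F) (hR : 0 < R)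
    (hharm : ∀ x ∈ ball x₀ (2 * R), lapl n F x = 0) (hS : ∀ x ∈ ball x₀ (2 * R), |F x| ≤ S)
    (hz : z ∈ ball x₀ R) :
    (∫ y, meanWeight n y) * |F z - F x₀| ≤
      volume.real (ball (0 : Efull n) 2) * (10 * ‖R⁻¹ • (z - x₀)‖ * S) := by
  set k : Efull n := R⁻¹ • (z - x₀)
  have hk : ‖k‖ ≤ 1 := by
    rw [norm_smul, norm_inv, Real.norm_of_nonneg hR.le, inv_mul_le_one₀ hR]
    exact (mem_ball_iff_norm.1 hz).le
  have hpointwise (y : Efull n) : ‖(meanWeight n (y - k) - meanWeight n y) * F (x₀ + R • y)‖ ≤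
      (ball (0 : Efull n) 2).indicator (fun _ => 10 * ‖k‖ * S) y := by
    have hweight := abs_meanWeight_sub_sub_le_indicator (y := y) hk
    rw [norm_mul, Real.norm_eq_abs, Real.norm_eq_abs]
    by_cases hy : y ∈ ball (0 : Efull n) 2
    · rw [Set.indicator_of_mem hy] at hweight ⊢
      refine mul_le_mul hweight (hS _ ?_) (abs_nonneg _) (by positivity)
      rw [mem_ball_iff_norm, add_sub_cancel_left, norm_smul, Real.norm_of_nonneg hR.le, mul_comm]
      exact mul_lt_mul_of_pos_right (mem_ball_zero_iff.1 hy) hR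
    · rw [Set.indicator_of_notMem hy] at hweight ⊢
      exact mul_nonpos_of_nonpos_of_nonneg hweight (abs_nonneg _)
  have hinteg : Integrable ((ball (0 : Efull n) 2).indicator fun _ => 10 * ‖k‖ * S) :=
    (integrable_indicator_iff measurableSet_ball).2 (integrableOn_const measure_ball_lt_top.ne)
  calc (∫ y, meanWeight n y) * |F z - F x₀|
      = ‖(∫ y, meanWeight n y) * (F z - F x₀)‖ := by
        rw [norm_mul, Real.norm_of_nonneg (integral_meanWeight_pos n).le, Real.norm_eq_abs]
    _ ≤ ∫ y, (ball (0 : Efull n) 2).indicator (fun _ => 10 * ‖k‖ * S) y := by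
        rw [integral_meanWeight_mul_sub_eq hF hR hharm hz]
        exact norm_integral_le_of_norm_le hinteg (.of_forall hpointwise)
    _ = volume.real (ball (0 : Efull n) 2) * (10 * ‖k‖ * S) := by
        rw [integral_indicator measurableSet_ball, setIntegral_const, smul_eq_mul]

/-- The dimensional constant of the interior gradient estimate `norm_fderiv_le_of_lapl_eq_zero`. -/
def gradConst (n : ℕ) : ℝ :=
  40 * volume.real (ball (0 : Efull n) 2) / ∫ y, meanWeight n y

lemma gradConst_nonneg (n : ℕ) : 0 ≤ gradConst n :=
  div_nonneg (by positivity) (integral_meanWeight_pos n).le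

lemma norm_fderiv_le_of_lapl_eq_zero [NeZero n] (hR : 0 < R)
    (hf : ∀ x ∈ ball x₀ R, ContDiffAt ℝ 2 f x) (hharm : ∀ x ∈ ball x₀ R, lapl n f x = 0)
    (hS : ∀ x ∈ ball x₀ R, |f x - c| ≤ S) : ‖fderiv ℝ f x₀‖ ≤ gradConst n * S / R := by
  have hS₀ : 0 ≤ S := (abs_nonneg _).trans (hS x₀ (mem_ball_self hR))
  obtain ⟨F, hF, hFf⟩ := exists_contDiff_eqOn_closedBall (f := fun x => f x + -c) (x₀ := x₀)
    (r := 2 * (R / 4)) (R := R) (by linarith) (by linarith)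
    fun x hx => (hf x hx).add contDiffAt_const
  have hsub : ball x₀ (2 * (R / 4)) ⊆ ball x₀ R := ball_subset_ball (by linarith)
  have hFharm : ∀ x ∈ ball x₀ (2 * (R / 4)), lapl n F x = 0 := fun x hx => by
    rw [lapl_eq_of_eqOn_closedBall hFf hx, lapl_add_const (hf x (hsub hx)), hharm x (hsub hx)]
  have hFS : ∀ x ∈ ball x₀ (2 * (R / 4)), |F x| ≤ S := fun x hx => by
    rw [hFf (ball_subset_closedBall hx)]
    exact hS x (hsub hx)
  refine norm_fderiv_le_of_lip' ℝ
    (div_nonneg (mul_nonneg (gradConst_nonneg n) hS₀) hR.le) ?_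
  filter_upwards [ball_mem_nhds x₀ (show 0 < R / 4 by linarith)] with z hz
  have hlip := integral_meanWeight_mul_abs_sub_le hF (by linarith) hFharm hFS hz
  have hFz : F z - F x₀ = f z - f x₀ := by
    rw [hFf (ball_subset_closedBall (ball_subset_ball (by linarith) hz)),
      hFf (mem_closedBall_self (by linarith)), add_sub_add_right_eq_sub]
  rw [hFz, mul_comm, ← le_div_iff₀ (integral_meanWeight_pos n)] at hlip
  refine hlip.trans_eq ?_
  rw [gradConst, norm_smul, norm_inv, Real.norm_of_nonneg (by linarith)]
  field_simp
  ring

end LocalMeanValue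

/-! ### The local maximum principle -/

section Truncation

variable {η s : ℝ}

/-- A `C²` convex substitute for the truncated square `s ↦ s₊²`, at distance scale `η`. -/
def softSq (η s : ℝ) : ℝ := max s 0 ^ 3 / (max s 0 + η)

/-- The derivative of `softSq η`. -/
def softSqDeriv (η s : ℝ) : ℝ := max s 0 ^ 2 * (2 * max s 0 + 3 * η) / (max s 0 + η) ^ 2

/-- The second derivative of `softSq η`. -/
def softSqDeriv₂ (η s : ℝ) : ℝ :=
  2 * max s 0 * (max s 0 ^ 2 + 3 * max s 0 * η + 3 * η ^ 2) / (max s 0 + η) ^ 3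

lemma softSq_of_nonpos (hs : s ≤ 0) : softSq η s = 0 := by simp [softSq, hs]

lemma softSq_nonneg (hη : 0 < η) : 0 ≤ softSq η s := by unfold softSq; positivity

lemma softSqDeriv_nonneg (hη : 0 < η) : 0 ≤ softSqDeriv η s := by unfold softSqDeriv; positivity

lemma softSqDeriv₂_nonneg (hη : 0 < η) : 0 ≤ softSqDeriv₂ η s := by
  unfold softSqDeriv₂; positivity

lemma softSq_le_sq (hη : 0 < η) : softSq η s ≤ max s 0 ^ 2 := by
  rw [softSq, div_le_iff₀ (by positivity), pow_succ]
  gcongr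
  linarith

lemma sub_sq_le_softSq (hη : 0 < η) (hs : η ≤ s) : (s - η) ^ 2 ≤ softSq η s := by
  rw [softSq, max_eq_left (by linarith), le_div_iff₀ (by linarith)]
  nlinarith [mul_nonneg hη.le (sub_nonneg.2 hs), mul_nonneg (mul_nonneg hη.le hη.le)
    (sub_nonneg.2 hs), mul_nonneg (hη.le.trans hs) (mul_nonneg hη.le (sub_nonneg.2 hs))]

lemma hasDerivAt_softSq (hη : 0 < η) (s : ℝ) : HasDerivAt (softSq η) (softSqDeriv η s) s := by
  refine hasDerivAt_comp_max_zero (F := fun s => s ^ 3 / (s + η))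
    (F' := fun s => s ^ 2 * (2 * s + 3 * η) / (s + η) ^ 2) (fun t ht => ?_) (by simp) s
  have hpos : t + η ≠ 0 := by positivity
  refine ((hasDerivAt_pow 3 t).div ((hasDerivAt_id t).add_const η) hpos).congr_deriv ?_
  simp only [id_eq]
  ring

lemma hasDerivAt_softSqDeriv (hη : 0 < η) (s : ℝ) :
    HasDerivAt (softSqDeriv η) (softSqDeriv₂ η s) s := by
  refine hasDerivAt_comp_max_zero (F := fun s => s ^ 2 * (2 * s + 3 * η) / (s + η) ^ 2)
    (F' := fun s => 2 * s * (s ^ 2 + 3 * s * η + 3 * η ^ 2) / (s + η) ^ 3)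
    (fun t ht => ?_) (by simp) s
  have hpos : t + η ≠ 0 := by positivity
  refine (((hasDerivAt_pow 2 t).mul (((hasDerivAt_id t).const_mul 2).add_const (3 * η))).div
    (((hasDerivAt_id t).add_const η).pow 2) (pow_ne_zero 2 hpos)).congr_deriv ?_
  simp only [Pi.pow_apply, Pi.mul_apply, id_eq]
  field_simp
  ring

lemma contDiff_two_of_hasDerivAt {G G' G'' : ℝ → ℝ} (hG : ∀ s, HasDerivAt G (G' s) s)
    (hG' : ∀ s, HasDerivAt G' (G'' s) s) (hG'' : Continuous G'') : ContDiff ℝ 2 G := by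
  have hG'_contDiff : ContDiff ℝ 1 G' := by
    refine contDiff_one_iff_deriv.2 ⟨fun s => (hG' s).differentiableAt, ?_⟩
    rwa [show deriv G' = G'' from funext fun s => (hG' s).deriv]
  refine (contDiff_succ_iff_deriv (n := 1)).2 ⟨fun s => (hG s).differentiableAt, by simp, ?_⟩
  rwa [show deriv G = G' from funext fun s => (hG s).deriv]

lemma contDiff_softSq (hη : 0 < η) : ContDiff ℝ 2 (softSq η) := by
  refine contDiff_two_of_hasDerivAt (hasDerivAt_softSq hη) (hasDerivAt_softSqDeriv hη) ?_
  have hpos (s : ℝ) : (max s 0 + η) ^ 3 ≠ 0 := by positivity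
  unfold softSqDeriv₂
  exact Continuous.div (by fun_prop) (by fun_prop) hpos

end Truncation

section LocalMaximumPrinciple

variable {n : ℕ} {Ω : Set (Efull n)} {u v : Efull n → ℝ} {k η r R : ℝ} {x : Efull n}

/-- The regularized square of the excess of `u` over the level `k`, extended by zero outside `Ω`. -/
def excessSq (Ω : Set (Efull n)) (u : Efull n → ℝ) (k η : ℝ) : Efull n → ℝ :=
  Ω.indicator fun z => softSq η (u z - k)

lemma excessSq_eventuallyEq (hΩ : IsOpen Ω) (hx : x ∈ Ω) :
    excessSq Ω u k η =ᶠ[𝓝 x] fun z => softSq η (u z + -k) := by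
  filter_upwards [hΩ.mem_nhds hx] with y hy
  rw [excessSq, Set.indicator_of_mem hy, sub_eq_add_neg]

lemma excessSq_eventuallyEq_zero (hx : ∀ᶠ y in 𝓝[Ω] x, u y ≤ k) :
    excessSq Ω u k η =ᶠ[𝓝 x] fun _ => 0 := by
  filter_upwards [eventually_nhdsWithin_iff.1 hx] with y hy
  exact Set.indicator_apply_eq_zero.2 fun hyΩ => softSq_of_nonpos (sub_nonpos.2 (hy hyΩ))

lemma contDiffAt_excessSq (hη : 0 < η) (hΩ : IsOpen Ω) (hu : ∀ z ∈ Ω, ContDiffAt ℝ 2 u z)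
    (hx : x ∉ Ω → ∀ᶠ y in 𝓝[Ω] x, u y ≤ k) : ContDiffAt ℝ 2 (excessSq Ω u k η) x := by
  by_cases hxΩ : x ∈ Ω
  · exact ((contDiff_softSq hη).contDiffAt.comp x
      ((hu x hxΩ).add contDiffAt_const)).congr_of_eventuallyEq (excessSq_eventuallyEq hΩ hxΩ)
  · exact contDiffAt_const.congr_of_eventuallyEq (excessSq_eventuallyEq_zero (hx hxΩ))

lemma lapl_excessSq_nonneg (hη : 0 < η) (hΩ : IsOpen Ω) (hu : ∀ z ∈ Ω, ContDiffAt ℝ 2 u z)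
    (hsub : ∀ z ∈ Ω, 0 ≤ lapl n u z) (hx : x ∉ Ω → ∀ᶠ y in 𝓝[Ω] x, u y ≤ k) :
    0 ≤ lapl n (excessSq Ω u k η) x := by
  by_cases hxΩ : x ∈ Ω
  · rw [lapl_congr (excessSq_eventuallyEq hΩ hxΩ),
      lapl_comp ((hu x hxΩ).add contDiffAt_const) (hasDerivAt_softSq hη)
        (hasDerivAt_softSqDeriv hη), lapl_add_const (hu x hxΩ)]
    exact add_nonneg (mul_nonneg (softSqDeriv₂_nonneg hη) (sum_nonneg fun α _ => sq_nonneg _))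
      (mul_nonneg (softSqDeriv_nonneg hη) (hsub x hxΩ))
  · exact lapl_nonneg_of_isLocalMin (contDiffAt_excessSq hη hΩ hu hx)
      ((isLocalMin_const (b := (0 : ℝ))).congr
        (excessSq_eventuallyEq_zero (hx hxΩ)).symm)

lemma excessSq_nonneg (hη : 0 < η) : 0 ≤ excessSq Ω u k η x :=
  Set.indicator_nonneg (fun _ _ => softSq_nonneg hη) x

lemma excessSq_le_indicator_sq (hη : 0 < η) (hk : 0 ≤ k) :
    excessSq Ω u k η x ≤ Ω.indicator (fun z => ‖u z‖ ^ 2) x := by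
  refine Set.indicator_le_indicator ((softSq_le_sq hη).trans ?_)
  have hle : max (u x - k) 0 ≤ ‖u x‖ :=
    max_le (by linarith [Real.le_norm_self (u x)]) (norm_nonneg _)
  gcongr

lemma integrable_excessSq (hη : 0 < η) (hk : 0 ≤ k) (hΩ : IsOpen Ω) (hu : ContinuousOn u Ω)
    (hinteg : IntegrableOn (fun z => ‖u z‖ ^ 2) Ω) : Integrable (excessSq Ω u k η) := by
  refine (hinteg.integrable_indicator hΩ.measurableSet).mono' ?_ (.of_forall fun z => ?_)
  · refine (aestronglyMeasurable_indicator_iff hΩ.measurableSet).2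
      (ContinuousOn.aestronglyMeasurable ?_ hΩ.measurableSet)
    exact (contDiff_softSq hη).continuous.comp_continuousOn (hu.sub continuousOn_const)
  · rw [Real.norm_of_nonneg (excessSq_nonneg hη)]
    exact excessSq_le_indicator_sq hη hk

lemma integral_excessSq_le (hη : 0 < η) (hk : 0 ≤ k) (hΩ : IsOpen Ω) (hu : ContinuousOn u Ω)
    (hinteg : IntegrableOn (fun z => ‖u z‖ ^ 2) Ω) :
    ∫ z, excessSq Ω u k η z ≤ ∫ z in Ω, ‖u z‖ ^ 2 := by
  rw [← integral_indicator hΩ.measurableSet]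
  exact integral_mono (integrable_excessSq hη hk hΩ hu hinteg)
    (hinteg.integrable_indicator hΩ.measurableSet) fun z => excessSq_le_indicator_sq hη hk

lemma integral_meanWeight_mul_apply_le_integral [NeZero n] (hr : 0 < r) (hrR : r < R)
    (hv : ∀ z ∈ ball x R, ContDiffAt ℝ 2 v z) (hsub : ∀ z ∈ ball x R, 0 ≤ lapl n v z)
    (hv₀ : ∀ z, 0 ≤ v z) (hinteg : Integrable v) :
    (∫ y, meanWeight n y) * v x ≤ (r ^ Module.finrank ℝ (Efull n))⁻¹ * ∫ z, v z := by
  calc (∫ y, meanWeight n y) * v x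
      ≤ ∫ y, meanWeight n y * v (x + r • y) :=
        integral_meanWeight_mul_le hr hrR hv fun z hz => hsub z (ball_subset_ball hrR.le hz)
    _ ≤ ∫ y, v (x + r • y) :=
        integral_mono_of_nonneg
          (.of_forall fun y => mul_nonneg (meanWeight_nonneg y) (hv₀ _))
          ((hinteg.comp_add_left x).comp_smul hr.ne')
          (.of_forall fun y => mul_le_of_le_one_left (hv₀ _) (meanWeight_le_one y))
    _ = (r ^ Module.finrank ℝ (Efull n))⁻¹ * ∫ z, v z := by
        rw [Measure.integral_comp_smul volume (fun y => v (x + y)) r,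
          integral_add_left_eq_self v x, smul_eq_mul, abs_of_nonneg (by positivity)]

/-- The constant of the `L² → L^∞` estimate `le_add_supConst_mul_sqrt` on balls of radius above
`r`. -/
def supConst (n : ℕ) (r : ℝ) : ℝ :=
  √((r ^ Module.finrank ℝ (Efull n))⁻¹ / ∫ y, meanWeight n y)

lemma excessSq_le_supConst_sq_mul [NeZero n] (hη : 0 < η) (hk : 0 ≤ k) (hΩ : IsOpen Ω)
    (hu : ∀ z ∈ Ω, ContDiffAt ℝ 2 u z) (hsub : ∀ z ∈ Ω, 0 ≤ lapl n u z)
    (hinteg : IntegrableOn (fun z => ‖u z‖ ^ 2) Ω) (hr : 0 < r) (hrR : r < R)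
    (hbdry : ∀ z ∈ ball x R \ Ω, ∀ᶠ y in 𝓝[Ω] z, u y ≤ k) :
    excessSq Ω u k η x ≤ supConst n r ^ 2 * ∫ z in Ω, ‖u z‖ ^ 2 := by
  have hcont : ContinuousOn u Ω := fun z hz => (hu z hz).continuousAt.continuousWithinAt
  have hmean := integral_meanWeight_mul_apply_le_integral hr hrR
    (fun z hz => contDiffAt_excessSq hη hΩ hu fun hzΩ => hbdry z ⟨hz, hzΩ⟩)
    (fun z hz => lapl_excessSq_nonneg hη hΩ hu hsub fun hzΩ => hbdry z ⟨hz, hzΩ⟩)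
    (fun z => excessSq_nonneg hη) (integrable_excessSq hη hk hΩ hcont hinteg)
  have hpos := integral_meanWeight_pos n
  rw [supConst, Real.sq_sqrt (by positivity), div_mul_eq_mul_div, le_div_iff₀ hpos, mul_comm]
  exact hmean.trans (by gcongr; exact integral_excessSq_le hη hk hΩ hcont hinteg)

lemma le_add_supConst_mul_sqrt [NeZero n] (hΩ : IsOpen Ω) (hu : ∀ z ∈ Ω, ContDiffAt ℝ 2 u z)
    (hsub : ∀ z ∈ Ω, 0 ≤ lapl n u z) (hinteg : IntegrableOn (fun z => ‖u z‖ ^ 2) Ω)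
    {N : ℝ} (hN : 0 ≤ N) (hx : x ∈ Ω) (hr : 0 < r) (hrR : r < R)
    (hbdry : ∀ z ∈ ball x R \ Ω, ∀ k > N, ∀ᶠ y in 𝓝[Ω] z, u y ≤ k) :
    u x ≤ N + supConst n r * √(∫ z in Ω, ‖u z‖ ^ 2) := by
  refine le_of_forall_pos_le_add fun δ hδ => ?_
  obtain ⟨η, hη, rfl⟩ : ∃ η > 0, η + η = δ := ⟨δ / 2, half_pos hδ, add_halves δ⟩
  have hnonneg : 0 ≤ supConst n r * √(∫ z in Ω, ‖u z‖ ^ 2) :=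
    mul_nonneg (Real.sqrt_nonneg _) (Real.sqrt_nonneg _)
  rcases le_total (u x - (N + η)) η with hle | hle
  · linarith
  · have hsq : (u x - (N + η) - η) ^ 2 ≤ (supConst n r * √(∫ z in Ω, ‖u z‖ ^ 2)) ^ 2 := by
      rw [mul_pow, Real.sq_sqrt (integral_nonneg fun z => by positivity)]
      refine (sub_sq_le_softSq hη hle).trans ?_
      simpa only [excessSq, Set.indicator_of_mem hx] using
        excessSq_le_supConst_sq_mul hη (by linarith) hΩ hu hsub hinteg hr hrR
          fun z hz => hbdry z hz (N + η) (by linarith)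
    linarith [le_of_abs_le (abs_le_of_sq_le_sq hsq hnonneg)]

end LocalMaximumPrinciple

section NeckSupBound

variable {n : ℕ} {ε a : ℝ} {h h1 h2 φ ψ : Ep n → ℝ} {u : Efull n → ℝ} {x : Efull n}

lemma continuousAt_graph (hh : ContinuousOn h (closedBall 0 1)) (hx : ‖x.1‖ < 1) :
    ContinuousAt (fun y : Efull n => a + h y.1) x :=
  continuousAt_const.add <| (hh.continuousAt (closedBall_mem_nhds_of_mem
    (mem_ball_zero_iff.2 hx))).comp continuousAt_fst

lemma eventually_graph_lt (hh : ContinuousOn h (closedBall 0 1)) (hx : ‖x.1‖ < 1)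
    (hax : a + h x.1 < x.2) : ∀ᶠ y : Efull n in 𝓝 x, a + h y.1 < y.2 :=
  (continuousAt_graph hh hx).tendsto.eventually_lt continuousAt_snd.tendsto hax

lemma eventually_lt_graph (hh : ContinuousOn h (closedBall 0 1)) (hx : ‖x.1‖ < 1)
    (hax : x.2 < a + h x.1) : ∀ᶠ y : Efull n in 𝓝 x, y.2 < a + h y.1 :=
  continuousAt_snd.tendsto.eventually_lt (continuousAt_graph hh hx).tendsto hax

lemma isOpen_Omega (hh1 : ContinuousOn h1 (closedBall 0 1))
    (hh2 : ContinuousOn h2 (closedBall 0 1)) : IsOpen (Omega n ε h1 h2 1) := by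
  refine isOpen_iff_mem_nhds.2 fun x ⟨hx, hx2, hx1⟩ => ?_
  have hcyl : ∀ᶠ y : Efull n in 𝓝 x, ‖y.1‖ < 1 :=
    continuous_fst.norm.continuousAt.eventually_lt continuousAt_const hx
  filter_upwards [hcyl, eventually_graph_lt hh2 hx hx2, eventually_lt_graph hh1 hx hx1]
    with y hy hy2 hy1
  exact ⟨hy, hy2, hy1⟩

lemma eventually_le_of_notMem_Omega (hh1 : ContinuousOn h1 (closedBall 0 1))
    (hh2 : ContinuousOn h2 (closedBall 0 1)) (hu : AttainsBV n ε h1 h2 u φ ψ) {N k : ℝ}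
    (hφ : ∀ y, ‖y‖ ≤ 1 → φ y ≤ N) (hψ : ∀ y, ‖y‖ ≤ 1 → ψ y ≤ N) (hk : N < k)
    (hx : ‖x.1‖ < 1) (hxΩ : x ∉ Omega n ε h1 h2 1) :
    ∀ᶠ y in 𝓝[Omega n ε h1 h2 1] x, u y ≤ k := by
  have hbdry (hmem : x ∈ Omega n ε h1 h2 1 ∪ Gammap n ε h1 1 ∪ Gammam n ε h2 1) (hN : u x ≤ N) :
      ∀ᶠ y in 𝓝[Omega n ε h1 h2 1] x, u y ≤ k :=
    (((hu.1 x hmem).mono fun y hy => .inl (.inl hy)).eventually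
      (gt_mem_nhds (hN.trans_lt hk))).mono fun y hy => hy.le
  have hfar (hout : ∀ᶠ y in 𝓝 x, y ∉ Omega n ε h1 h2 1) :
      ∀ᶠ y in 𝓝[Omega n ε h1 h2 1] x, u y ≤ k :=
    eventually_nhdsWithin_iff.2 (hout.mono fun y hy hyΩ => absurd hyΩ hy)
  obtain ⟨x', t⟩ := x
  rcases lt_trichotomy t (-ε / 2 + h2 x') with hbelow | rfl | habove
  · exact hfar ((eventually_lt_graph hh2 hx hbelow).mono fun y hy hyΩ => hy.not_gt hyΩ.2.1)
  · exact hbdry (.inr ⟨hx.le, rfl⟩) ((hu.2 x' hx.le).2.trans_le (hψ x' hx.le))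
  · rcases lt_trichotomy t (ε / 2 + h1 x') with hbelow | rfl | habove'
    · exact absurd ⟨hx, habove, hbelow⟩ hxΩ
    · exact hbdry (.inl (.inr ⟨hx.le, rfl⟩)) ((hu.2 x' hx.le).1.trans_le (hφ x' hx.le))
    · exact hfar ((eventually_graph_lt hh1 hx habove').mono fun y hy hyΩ => hy.not_gt hyΩ.2.2)

lemma HarmBV.neg (hh1 : ContinuousOn h1 (closedBall 0 1)) (hh2 : ContinuousOn h2 (closedBall 0 1))
    (hu : HarmBV n ε h1 h2 u φ ψ) :
    HarmBV n ε h1 h2 (fun x => -u x) (fun y => -φ y) fun y => -ψ y := by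
  obtain ⟨hC2, hharm, hinteg, hcont, hbv⟩ := hu
  refine ⟨hC2.neg, fun x hx => ?_, ?_, hcont.neg, fun y hy => ?_⟩
  · rw [lapl_neg (hC2.contDiffAt ((isOpen_Omega hh1 hh2).mem_nhds hx)), hharm x hx, neg_zero]
  · simpa only [fderiv_fun_neg, norm_neg] using hinteg
  · exact ⟨congrArg Neg.neg (hbv y hy).1, congrArg Neg.neg (hbv y hy).2⟩

lemma HarmBV.integrableOn_norm_sq (hΩ : IsOpen (Omega n ε h1 h2 1))
    (hu : HarmBV n ε h1 h2 u φ ψ) : IntegrableOn (fun y => ‖u y‖ ^ 2) (Omega n ε h1 h2 1) :=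
  hu.2.2.1.mono' ((hu.1.continuousOn.norm.pow 2).aestronglyMeasurable hΩ.measurableSet)
    (.of_forall fun y => by rw [norm_pow, norm_norm]; exact le_add_of_nonneg_right (by positivity))

lemma HarmBV.le_add [NeZero n] (hh1 : ContinuousOn h1 (closedBall 0 1))
    (hh2 : ContinuousOn h2 (closedBall 0 1)) (hu : HarmBV n ε h1 h2 u φ ψ) {N : ℝ} (hN : 0 ≤ N)
    (hφ : ∀ y, ‖y‖ ≤ 1 → φ y ≤ N) (hψ : ∀ y, ‖y‖ ≤ 1 → ψ y ≤ N)
    (hx : x ∈ Omega n ε h1 h2 (3 / 4)) :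
    u x ≤ N + supConst n (1 / 8) * √(∫ y in Omega n ε h1 h2 1, ‖u y‖ ^ 2) := by
  have hΩ := isOpen_Omega (ε := ε) hh1 hh2
  refine le_add_supConst_mul_sqrt (R := 1 / 4) hΩ (fun z hz => hu.1.contDiffAt (hΩ.mem_nhds hz))
    (fun z hz => (hu.2.1 z hz).ge) (hu.integrableOn_norm_sq hΩ) hN
    ⟨hx.1.trans (by norm_num), hx.2⟩ (by norm_num) (by norm_num) fun z hz k hk => ?_
  refine eventually_le_of_notMem_Omega hh1 hh2 hu.2.2.2 hφ hψ hk ?_ hz.2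
  have hzx : ‖z.1 - x.1‖ < 1 / 4 := (norm_fst_le (z - x)).trans_lt (mem_ball_iff_norm.1 hz.1)
  linarith [norm_le_norm_add_norm_sub' z.1 x.1, hx.1]

lemma HarmBV.abs_le_add [NeZero n] (hh1 : ContinuousOn h1 (closedBall 0 1))
    (hh2 : ContinuousOn h2 (closedBall 0 1)) (hu : HarmBV n ε h1 h2 u φ ψ) {N : ℝ}
    (hφ : ∀ y, ‖y‖ ≤ 1 → |φ y| ≤ N) (hψ : ∀ y, ‖y‖ ≤ 1 → |ψ y| ≤ N)
    (hx : x ∈ Omega n ε h1 h2 (3 / 4)) :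
    |u x| ≤ N + supConst n (1 / 8) * √(∫ y in Omega n ε h1 h2 1, ‖u y‖ ^ 2) := by
  have hN : 0 ≤ N := (abs_nonneg _).trans (hφ 0 (by simp))
  have hneg := hu.neg hh1 hh2
  refine abs_le'.2 ⟨hu.le_add hh1 hh2 hN (fun y hy => (le_abs_self _).trans (hφ y hy))
    (fun y hy => (le_abs_self _).trans (hψ y hy)) hx, ?_⟩
  simpa only [norm_neg] using hneg.le_add hh1 hh2 hN
    (fun y hy => (neg_le_abs _).trans (hφ y hy)) (fun y hy => (neg_le_abs _).trans (hψ y hy)) hx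

end NeckSupBound

/-! ### Barriers near a graph -/

section Gap

variable {n : ℕ} {σ c κ M : ℝ} {f h : Ep n → ℝ} {x y : Efull n}

/-- The signed vertical distance from `x` to the graph `x_n = c + h(x')`. The sign `σ = ±1` makes
it positive below the graph (`σ = 1`) or above it (`σ = -1`), so that both boundary graphs of the
neck can be treated at once. -/
def gap (σ c : ℝ) (h : Ep n → ℝ) (x : Efull n) : ℝ := σ * (c + h x.1 - x.2)

lemma C2BoundedBy.contDiffAt_comp_fst (hf : C2BoundedBy n f M) (hx : ‖x.1‖ < 1) :
    ContDiffAt ℝ 2 (fun y : Efull n => f y.1) x :=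
  (hf.contDiffAt x.1 hx).comp x contDiffAt_fst

lemma C2BoundedBy.continuousOn_comp_fst (hf : C2BoundedBy n f M) :
    ContinuousOn (fun y : Efull n => f y.1) {x | ‖x.1‖ ≤ 1} :=
  hf.continuousOn.comp continuousOn_fst fun _ hx => mem_closedBall_zero_iff.2 hx

lemma C2BoundedBy.abs_lapl_comp_fst_le (hf : C2BoundedBy n f M) (hx : ‖x.1‖ < 1) :
    |lapl n (fun y => f y.1) x| ≤ n * M := by
  rw [lapl_comp_fst (hf.contDiffAt x.1 hx)]
  calc |∑ α, secondDirDeriv f x.1 (dir n α).1|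
      ≤ ∑ α, |secondDirDeriv f x.1 (dir n α).1| := abs_sum_le_sum_abs _ _
    _ ≤ ∑ _α : Fin n, M :=
        sum_le_sum fun α _ => hf.abs_secondDirDeriv_le hx (norm_dir_fst_le_one α)
    _ = n * M := by simp

lemma contDiffAt_gap (hh : C2BoundedBy n h κ) (hx : ‖x.1‖ < 1) : ContDiffAt ℝ 2 (gap σ c h) x :=
  contDiffAt_const.mul ((contDiffAt_const.add (hh.contDiffAt_comp_fst hx)).sub contDiffAt_snd)

lemma continuousOn_gap (hh : C2BoundedBy n h κ) : ContinuousOn (gap σ c h) {x | ‖x.1‖ ≤ 1} :=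
  continuousOn_const.mul ((continuousOn_const.add hh.continuousOn_comp_fst).sub continuousOn_snd)

lemma lapl_gap (hh : C2BoundedBy n h κ) (hx : ‖x.1‖ < 1) :
    lapl n (gap σ c h) x = σ * lapl n (fun y => h y.1) x := by
  have hgraph := hh.contDiffAt_comp_fst hx
  have hsnd : ContDiffAt ℝ 2 (fun y : Efull n => -y.2) x := contDiffAt_snd.neg
  have hlapl_snd : lapl n (fun y => y.2) x = 0 :=
    sum_eq_zero fun α _ => secondDirDeriv_clm (ContinuousLinearMap.snd ℝ (Ep n) ℝ) x _
  have hgap : gap σ c h = fun y => σ * (h y.1 + -y.2 + c) := by funext y; unfold gap; ring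
  rw [hgap, lapl_const_mul ((hgraph.add hsnd).add contDiffAt_const),
    lapl_add_const (hgraph.add hsnd), lapl_add hgraph hsnd, lapl_neg contDiffAt_snd, hlapl_snd,
    neg_zero, add_zero]

lemma abs_lapl_gap_le (hσ : |σ| = 1) (hh : C2BoundedBy n h κ) (hx : ‖x.1‖ < 1) :
    |lapl n (gap σ c h) x| ≤ n * κ := by
  rw [lapl_gap hh hx, abs_mul, hσ, one_mul]
  exact hh.abs_lapl_comp_fst_le hx

lemma fderiv_gap_vertical (hh : C2BoundedBy n h κ) (hx : ‖x.1‖ < 1) :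
    fderiv ℝ (gap σ c h) x (0, 1) = -σ := by
  have hgraph := (hh.contDiffAt x.1 hx).differentiableAt two_ne_zero
  have hgap : HasFDerivAt (gap σ c h) _ x :=
    (((hgraph.hasFDerivAt.comp x hasFDerivAt_fst).const_add c).sub hasFDerivAt_snd).const_mul σ
  rw [hgap.fderiv]
  simp

lemma one_le_sum_sq_fderiv_gap [NeZero n] (hσ : |σ| = 1) (hh : C2BoundedBy n h κ)
    (hx : ‖x.1‖ < 1) : 1 ≤ ∑ α, (fderiv ℝ (gap σ c h) x (dir n α)) ^ 2 := by
  obtain ⟨α, hα⟩ := exists_dir_eq_vertical (n := n)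
  calc 1 = (fderiv ℝ (gap σ c h) x (dir n α)) ^ 2 := by
        rw [hα, fderiv_gap_vertical hh hx, neg_sq, ← sq_abs, hσ, one_pow]
    _ ≤ _ := single_le_sum (f := fun α => (fderiv ℝ (gap σ c h) x (dir n α)) ^ 2)
        (fun α _ => sq_nonneg _) (mem_univ α)

lemma abs_gap_sub_gap_le (hσ : |σ| = 1) (hh : C2BoundedBy n h κ) (hx : ‖x.1‖ < 1)
    (hy : ‖y.1‖ < 1) : |gap σ c h y - gap σ c h x| ≤ (κ + 1) * ‖y - x‖ := by
  have hκ : 0 ≤ κ := (abs_nonneg _).trans (hh.abs_le x.1 hx.le)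
  have hdiff : gap σ c h y - gap σ c h x = σ * ((h y.1 - h x.1) - (y - x).2) := by
    simp only [gap, Prod.snd_sub]; ring
  calc |gap σ c h y - gap σ c h x| = |(h y.1 - h x.1) - (y - x).2| := by
        rw [hdiff, abs_mul, hσ, one_mul]
    _ ≤ |h y.1 - h x.1| + |(y - x).2| := abs_sub _ _
    _ ≤ κ * ‖y - x‖ + ‖y - x‖ := by
        gcongr
        · exact (hh.abs_sub_le hy hx).trans (by gcongr; exact norm_fst_le (y - x))
        · exact norm_snd_le (y - x)
    _ = (κ + 1) * ‖y - x‖ := by ring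

end Gap

section Barrier

variable {n : ℕ} {σ c κ a b τ s : ℝ} {h w : Ep n → ℝ} {y₀ : Ep n} {x : Efull n}

/-- The barrier `(a/τ) t (2τ - t) + b |x' - y₀|²` with `t = gap σ c h`. -/
def barrier (σ c : ℝ) (h : Ep n → ℝ) (a b τ : ℝ) (y₀ : Ep n) (x : Efull n) : ℝ :=
  a / τ * (gap σ c h x * (2 * τ - gap σ c h x)) + b * ‖x.1 - y₀‖ ^ 2

lemma contDiff_norm_fst_sub_sq (y₀ : Ep n) : ContDiff ℝ 2 fun x : Efull n => ‖x.1 - y₀‖ ^ 2 :=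
  (contDiff_fst.sub contDiff_const).norm_sq ℝ

lemma contDiffAt_barrier (hh : C2BoundedBy n h κ) (hx : ‖x.1‖ < 1) :
    ContDiffAt ℝ 2 (barrier σ c h a b τ y₀) x :=
  (contDiffAt_const.mul
    ((contDiffAt_gap hh hx).mul (contDiffAt_const.sub (contDiffAt_gap hh hx)))).add
    (contDiffAt_const.mul (contDiff_norm_fst_sub_sq y₀).contDiffAt)

lemma continuousOn_barrier (hh : C2BoundedBy n h κ) :
    ContinuousOn (barrier σ c h a b τ y₀) {x | ‖x.1‖ ≤ 1} :=
  (continuousOn_const.mul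
    ((continuousOn_gap hh).mul (continuousOn_const.sub (continuousOn_gap hh)))).add
    (continuousOn_const.mul (contDiff_norm_fst_sub_sq y₀).continuous.continuousOn)

lemma mul_gap_add_le_barrier (ha : 0 ≤ a) (hτ : 0 < τ) (hx : gap σ c h x ∈ Set.Icc 0 τ) :
    a * gap σ c h x + b * ‖x.1 - y₀‖ ^ 2 ≤ barrier σ c h a b τ y₀ x := by
  refine add_le_add_left ?_ _
  calc a * gap σ c h x = a / τ * (gap σ c h x * τ) := by field_simp
    _ ≤ a / τ * (gap σ c h x * (2 * τ - gap σ c h x)) := by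
        gcongr
        · exact hx.1
        · linarith [hx.2]

lemma barrier_self_le (ha : 0 ≤ a) (hτ : 0 < τ) (hx : 0 ≤ gap σ c h x) :
    barrier σ c h a b τ x.1 x ≤ 2 * a * gap σ c h x := by
  calc barrier σ c h a b τ x.1 x = a / τ * (gap σ c h x * (2 * τ - gap σ c h x)) := by
        simp [barrier]
    _ ≤ a / τ * (gap σ c h x * (2 * τ)) := by gcongr; linarith
    _ = 2 * a * gap σ c h x := by field_simp

-- The concavity in the gap contributes `-2`, half of which absorbs the curvature of the graph.
lemma lapl_gap_mul_le_neg_one [NeZero n] (hσ : |σ| = 1) (hh : C2BoundedBy n h κ)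
    (hx : ‖x.1‖ < 1) (hτκ : 2 * n * κ * τ ≤ 1) (hgap : gap σ c h x ∈ Set.Icc 0 τ) :
    lapl n (fun y => gap σ c h y * (2 * τ - gap σ c h y)) x ≤ -1 := by
  have hκ : 0 ≤ κ := (abs_nonneg _).trans (hh.abs_le x.1 hx.le)
  have hG (s : ℝ) : HasDerivAt (fun s => s * (2 * τ - s)) (2 * τ - 2 * s) s :=
    ((hasDerivAt_id s).mul ((hasDerivAt_id s).const_sub (2 * τ))).congr_deriv
      (by simp only [id_eq]; ring)
  have hG' (s : ℝ) : HasDerivAt (fun s => 2 * τ - 2 * s) (-2) s := by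
    simpa using ((hasDerivAt_id s).const_mul 2).const_sub (2 * τ)
  have hcurv : (2 * τ - 2 * gap σ c h x) * lapl n (gap σ c h) x ≤ 2 * τ * (n * κ) := by
    calc (2 * τ - 2 * gap σ c h x) * lapl n (gap σ c h) x
        ≤ (2 * τ - 2 * gap σ c h x) * (n * κ) :=
          mul_le_mul_of_nonneg_left ((le_abs_self _).trans (abs_lapl_gap_le hσ hh hx))
            (by linarith [hgap.2])
      _ ≤ 2 * τ * (n * κ) := by gcongr; linarith [hgap.1]
  rw [lapl_comp (contDiffAt_gap hh hx) hG hG']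
  linarith [one_le_sum_sq_fderiv_gap (c := c) hσ hh hx]

lemma lapl_norm_fst_sub_sq_le (y₀ : Ep n) (x : Efull n) :
    lapl n (fun y => ‖y.1 - y₀‖ ^ 2) x ≤ 2 * n := by
  have hsq : ContDiffAt ℝ 2 (fun y : Ep n => ‖y - y₀‖ ^ 2) x.1 :=
    (contDiffAt_id.sub contDiffAt_const).norm_sq ℝ
  rw [lapl_comp_fst hsq]
  calc ∑ α, secondDirDeriv (fun y => ‖y - y₀‖ ^ 2) x.1 (dir n α).1 ≤ ∑ _α : Fin n, (2 : ℝ) :=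
        sum_le_sum fun α _ => by
          rw [secondDirDeriv_norm_sub_sq]
          linarith [pow_le_one₀ (n := 2) (norm_nonneg _) (norm_dir_fst_le_one α)]
    _ = 2 * n := by simp [mul_comm]

lemma lapl_barrier_le [NeZero n] (hσ : |σ| = 1) (hh : C2BoundedBy n h κ) (hx : ‖x.1‖ < 1)
    (ha : 0 ≤ a) (hb : 0 ≤ b) (hτ : 0 < τ) (hτκ : 2 * n * κ * τ ≤ 1)
    (hgap : gap σ c h x ∈ Set.Icc 0 τ) :
    lapl n (barrier σ c h a b τ y₀) x ≤ -(a / τ) + 2 * n * b := by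
  have hconcave : ContDiffAt ℝ 2 (fun y => gap σ c h y * (2 * τ - gap σ c h y)) x :=
    (contDiffAt_gap hh hx).mul (contDiffAt_const.sub (contDiffAt_gap hh hx))
  have hsq : ContDiffAt ℝ 2 (fun y : Efull n => ‖y.1 - y₀‖ ^ 2) x :=
    (contDiff_norm_fst_sub_sq y₀).contDiffAt
  calc lapl n (barrier σ c h a b τ y₀) x
      = a / τ * lapl n (fun y => gap σ c h y * (2 * τ - gap σ c h y)) x +
          b * lapl n (fun y => ‖y.1 - y₀‖ ^ 2) x := by
        rw [← lapl_const_mul hconcave, ← lapl_const_mul hsq]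
        exact lapl_add (contDiffAt_const.mul hconcave) (contDiffAt_const.mul hsq)
    _ ≤ a / τ * -1 + b * (2 * n) := by
        gcongr
        · exact lapl_gap_mul_le_neg_one hσ hh hx hτκ hgap
        · exact lapl_norm_fst_sub_sq_le y₀ x
    _ = -(a / τ) + 2 * n * b := by ring

/-- The closed box of points over `|x' - y₀| ≤ s` whose gap lies between `0` and `w(x')`. -/
def neckBox (σ c : ℝ) (h w : Ep n → ℝ) (y₀ : Ep n) (s : ℝ) : Set (Efull n) :=
  {x | x.1 ∈ closedBall y₀ s ∧ gap σ c h x ∈ Set.Icc 0 (w x.1)}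

/-- The open counterpart of `neckBox`. -/
def openNeckBox (σ c : ℝ) (h w : Ep n → ℝ) (y₀ : Ep n) (s : ℝ) : Set (Efull n) :=
  {x | x.1 ∈ ball y₀ s ∧ gap σ c h x ∈ Set.Ioo 0 (w x.1)}

lemma openNeckBox_subset_neckBox : openNeckBox σ c h w y₀ s ⊆ neckBox σ c h w y₀ s :=
  fun _ hx => ⟨ball_subset_closedBall hx.1, Set.Ioo_subset_Icc_self hx.2⟩

lemma continuousOn_gap_prodMk_sub (hh : C2BoundedBy n h κ)
    (hw : ContinuousOn w (closedBall 0 1)) :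
    ContinuousOn (fun x => (gap σ c h x, w x.1 - gap σ c h x)) {x : Efull n | ‖x.1‖ ≤ 1} :=
  (continuousOn_gap hh).prodMk ((hw.comp continuousOn_fst fun _ hx =>
    mem_closedBall_zero_iff.2 hx).sub (continuousOn_gap hh))

lemma isOpen_openNeckBox (hh : C2BoundedBy n h κ) (hw : ContinuousOn w (closedBall 0 1))
    (hball : ball y₀ s ⊆ closedBall 0 1) : IsOpen (openNeckBox σ c h w y₀ s) := by
  have hopen := ((continuousOn_gap_prodMk_sub (σ := σ) (c := c) hh hw).mono fun x hx =>
    mem_closedBall_zero_iff.1 (hball hx)).isOpen_inter_preimage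
    (s := Prod.fst ⁻¹' ball y₀ s) (isOpen_ball.preimage continuous_fst)
    ((isOpen_Ioi (a := (0 : ℝ))).prod (isOpen_Ioi (a := 0)))
  convert hopen using 1
  ext x
  simp [openNeckBox]

lemma isClosed_neckBox (hh : C2BoundedBy n h κ) (hw : ContinuousOn w (closedBall 0 1))
    (hball : closedBall y₀ s ⊆ closedBall 0 1) : IsClosed (neckBox σ c h w y₀ s) := by
  have hclosed := ((continuousOn_gap_prodMk_sub (σ := σ) (c := c) hh hw).mono fun x hx =>
    mem_closedBall_zero_iff.1 (hball hx)).preimage_isClosed_of_isClosed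
    (s := Prod.fst ⁻¹' closedBall y₀ s) (isClosed_closedBall.preimage continuous_fst)
    ((isClosed_Ici (a := (0 : ℝ))).prod (isClosed_Ici (a := 0)))
  convert hclosed using 1
  ext x
  simp [neckBox]

lemma isCompact_neckBox (hσ : |σ| = 1) (hh : C2BoundedBy n h κ)
    (hw : ContinuousOn w (closedBall 0 1)) (hwτ : ∀ y, w y ≤ τ)
    (hball : closedBall y₀ s ⊆ closedBall 0 1) : IsCompact (neckBox σ c h w y₀ s) := by
  refine ((isCompact_closedBall y₀ s).prod
    (isCompact_closedBall (0 : ℝ) (|c| + κ + τ))).of_isClosed_subset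
    (isClosed_neckBox hh hw hball) fun x hx => ⟨hx.1, ?_⟩
  have hgap : |c + h x.1 - x.2| ≤ τ := by
    rw [← one_mul |_|, ← hσ, ← abs_mul]
    exact (abs_of_nonneg hx.2.1).trans_le (hx.2.2.trans (hwτ x.1))
  have hgraph : |h x.1| ≤ κ := hh.abs_le x.1 (mem_closedBall_zero_iff.1 (hball hx.1))
  rw [mem_closedBall_zero_iff, Real.norm_eq_abs]
  calc |x.2| = |c + h x.1 - (c + h x.1 - x.2)| := by rw [sub_sub_cancel]
    _ ≤ |c + h x.1| + |c + h x.1 - x.2| := abs_sub _ _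
    _ ≤ |c| + |h x.1| + τ := add_le_add (abs_add_le _ _) hgap
    _ ≤ |c| + κ + τ := by gcongr

end Barrier

/-! ### Linear growth away from one boundary graph -/

/-- The neck seen from one of its two boundary graphs. The region over `|x'| < 1` is
`0 < gap < δ`; the harmonic function `u` equals `φ` on `gap = 0` and `ψ` on `gap = δ`. The constant
`M` bounds the `C²`-size of the data, and `C₁ M` bounds `u` over `|x'| < 3/4`. -/
structure NeckSide (n : ℕ) (σ c κ C₀ ε M C₁ : ℝ) (h δ φ ψ : Ep n → ℝ) (u : Efull n → ℝ) :
    Prop where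
  abs_sign : |σ| = 1
  κ_pos : 0 < κ
  C₀_pos : 0 < C₀
  ε_pos : 0 < ε
  ε_le_one : ε ≤ 1
  M_pos : 0 < M
  C₁_nonneg : 0 ≤ C₁
  graph : C2BoundedBy n h κ
  bdry : C2BoundedBy n φ M
  bdry' : C2BoundedBy n ψ M
  continuousOn_width : ContinuousOn δ (closedBall 0 1)
  abs_width_sub_le : ∀ y z : Ep n, ‖y‖ < 1 → ‖z‖ < 1 → |δ y - δ z| ≤ 2 * κ * ‖y - z‖
  le_width : ∀ y : Ep n, ‖y‖ ≤ 1 → (ε + ‖y‖ ^ 2) / C₀ ≤ δ y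
  width_le : ∀ y : Ep n, ‖y‖ ≤ 1 → δ y ≤ C₀ * (ε + ‖y‖ ^ 2)
  contDiffAt : ∀ x : Efull n, ‖x.1‖ < 1 → gap σ c h x ∈ Set.Ioo 0 (δ x.1) → ContDiffAt ℝ 2 u x
  lapl_eq_zero : ∀ x : Efull n, ‖x.1‖ < 1 → gap σ c h x ∈ Set.Ioo 0 (δ x.1) → lapl n u x = 0
  continuousOn : ContinuousOn u {x | ‖x.1‖ < 1 ∧ gap σ c h x ∈ Set.Icc 0 (δ x.1)}
  eq_of_gap_eq_zero : ∀ x : Efull n, ‖x.1‖ ≤ 1 → gap σ c h x = 0 → u x = φ x.1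
  eq_of_gap_eq_width : ∀ x : Efull n, ‖x.1‖ ≤ 1 → gap σ c h x = δ x.1 → u x = ψ x.1
  abs_le : ∀ x : Efull n, ‖x.1‖ < 3 / 4 → gap σ c h x ∈ Set.Icc 0 (δ x.1) → |u x| ≤ C₁ * M

/-- The slope `|φ - ψ|/(ε + |x'|²) + M` that controls `u` near `x'`. -/
def gapSlope {n : ℕ} (ε M : ℝ) (φ ψ : Ep n → ℝ) (y : Ep n) : ℝ :=
  |φ y - ψ y| / (ε + ‖y‖ ^ 2) + M

/-- The horizontal radius `√(ε + |y₀|²)/8` of the box around `y₀` on which `u` is compared with a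
barrier; the width of the neck is comparable to `ε + |y₀|²` throughout. -/
def neckRadius {n : ℕ} (ε : ℝ) (y₀ : Ep n) : ℝ := √(ε + ‖y₀‖ ^ 2) / 8

/-- The height of that box, for `p = ε + |y₀|²`: either above the other graph or so small that
the barrier is superharmonic. -/
def neckHeight (n : ℕ) (κ C₀ p : ℝ) : ℝ := min (4 * C₀ * p) (1 / (2 * n * κ))

/-- The constant of the linear growth estimate `NeckSide.abs_sub_le`. -/
def sideConst (n : ℕ) (κ C₀ C₁ : ℝ) : ℝ :=
  4 * C₀ * (130 * n * (C₁ + 1)) + (C₁ + 1) * (2 * n * κ)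

section NeckRadius

variable {n : ℕ} {ε : ℝ} {y₀ y : Ep n}

lemma neckRadius_sq (hε : 0 < ε) : neckRadius ε y₀ ^ 2 = (ε + ‖y₀‖ ^ 2) / 64 := by
  rw [neckRadius, div_pow, Real.sq_sqrt (by positivity)]
  norm_num

lemma closedBall_neckRadius_subset (hε : 0 < ε) (hε1 : ε ≤ 1) (hy₀ : ‖y₀‖ < 9 / 16) :
    closedBall y₀ (neckRadius ε y₀) ⊆ ball 0 (3 / 4) := by
  refine closedBall_subset_ball' ?_
  have hsq := neckRadius_sq (y₀ := y₀) hε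
  rw [dist_zero_right]
  nlinarith [norm_nonneg y₀]

lemma quarter_le_add_sq (hε : 0 < ε) (hy : y ∈ closedBall y₀ (neckRadius ε y₀)) :
    (ε + ‖y₀‖ ^ 2) / 4 ≤ ε + ‖y‖ ^ 2 := by
  have hsq := neckRadius_sq (y₀ := y₀) hε
  have hle : ‖y₀‖ ≤ ‖y‖ + neckRadius ε y₀ := by
    linarith [norm_le_norm_add_norm_sub y y₀, mem_closedBall_iff_norm.1 hy]
  nlinarith [norm_nonneg y₀, sq_nonneg (‖y‖ - neckRadius ε y₀)]

lemma add_sq_le_three_mul (hε : 0 < ε) (hy : y ∈ closedBall y₀ (neckRadius ε y₀)) :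
    ε + ‖y‖ ^ 2 ≤ 3 * (ε + ‖y₀‖ ^ 2) := by
  have hsq := neckRadius_sq (y₀ := y₀) hε
  have hle : ‖y‖ ≤ ‖y₀‖ + neckRadius ε y₀ := by
    linarith [norm_le_norm_add_norm_sub' y y₀, mem_closedBall_iff_norm.1 hy]
  nlinarith [norm_nonneg y, sq_nonneg (‖y₀‖ - neckRadius ε y₀)]

end NeckRadius

section GrowthConstants

variable {n : ℕ} {κ C₀ C₁ ε M p : ℝ} {φ ψ : Ep n → ℝ} {y : Ep n}

lemma le_gapSlope (hε : 0 < ε) : M ≤ gapSlope ε M φ ψ y :=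
  le_add_of_nonneg_left (by positivity)

lemma gapSlope_mul (hε : 0 < ε) :
    gapSlope ε M φ ψ y * (ε + ‖y‖ ^ 2) = |φ y - ψ y| + M * (ε + ‖y‖ ^ 2) := by
  rw [gapSlope, add_mul, div_mul_cancel₀ _ (by positivity)]

lemma neckHeight_pos [NeZero n] (hκ : 0 < κ) (hC₀ : 0 < C₀) (hp : 0 < p) :
    0 < neckHeight n κ C₀ p := by
  have hn : (0 : ℝ) < n := Nat.cast_pos.2 (NeZero.pos n)
  exact lt_min (by positivity) (by positivity)

lemma mul_neckHeight_le_one [NeZero n] (hκ : 0 < κ) : 2 * n * κ * neckHeight n κ C₀ p ≤ 1 := by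
  have hn : (0 : ℝ) < n := Nat.cast_pos.2 (NeZero.pos n)
  calc 2 * n * κ * neckHeight n κ C₀ p ≤ 2 * n * κ * (1 / (2 * n * κ)) := by
        gcongr; exact min_le_right _ _
    _ = 1 := mul_one_div_cancel (by positivity)

lemma neckHeight_eq_of_lt (h : neckHeight n κ C₀ p < 4 * C₀ * p) :
    neckHeight n κ C₀ p = 1 / (2 * n * κ) :=
  (min_choice _ _).resolve_left h.ne

lemma mul_le_sideConst (hκ : 0 ≤ κ) (hC₁ : 0 ≤ C₁) :
    4 * C₀ * (130 * n * (C₁ + 1)) ≤ sideConst n κ C₀ C₁ :=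
  le_add_of_nonneg_right (by positivity)

lemma mul_le_sideConst' (hC₀ : 0 ≤ C₀) (hC₁ : 0 ≤ C₁) :
    (C₁ + 1) * (2 * n * κ) ≤ sideConst n κ C₀ C₁ :=
  le_add_of_nonneg_left (by positivity)

lemma four_mul_le_sideConst [NeZero n] (hκ : 0 ≤ κ) (hC₀ : 0 ≤ C₀) (hC₁ : 0 ≤ C₁) :
    4 * C₀ ≤ sideConst n κ C₀ C₁ := by
  have hn : (1 : ℝ) ≤ n := Nat.one_le_cast.2 NeZero.one_le
  refine (le_mul_of_one_le_right (by positivity) ?_).trans (mul_le_sideConst hκ hC₁)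
  nlinarith

lemma sideConst_nonneg (hκ : 0 ≤ κ) (hC₀ : 0 ≤ C₀) (hC₁ : 0 ≤ C₁) : 0 ≤ sideConst n κ C₀ C₁ := by
  unfold sideConst
  positivity

-- Completing the square trades the linear growth of `φ - ψ` for a multiple of the width of the
-- neck and the quadratic part of the barrier.
lemma two_mul_mul_le (hM : 0 ≤ M) (hp : 0 < p) (r : ℝ) :
    2 * M * r ≤ M * p + M / p * r ^ 2 := by
  have hsq : M * p + M / p * r ^ 2 - 2 * M * r = M / p * (p - r) ^ 2 := by field_simp; ring
  have hnonneg : 0 ≤ M / p * (p - r) ^ 2 := by positivity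
  linarith

end GrowthConstants

namespace NeckSide

variable {n : ℕ} {σ c κ C₀ ε M C₁ a b τ s : ℝ} {h δ φ ψ : Ep n → ℝ} {u : Efull n → ℝ}
  {x : Efull n} {y₀ y z : Ep n}

lemma neg (S : NeckSide n σ c κ C₀ ε M C₁ h δ φ ψ u) :
    NeckSide n σ c κ C₀ ε M C₁ h δ (fun y => -φ y) (fun y => -ψ y) fun x => -u x :=
  { S with
    bdry := S.bdry.neg
    bdry' := S.bdry'.neg
    contDiffAt := fun x hx hgap => (S.contDiffAt x hx hgap).neg
    lapl_eq_zero := fun x hx hgap => by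
      rw [lapl_neg (S.contDiffAt x hx hgap), S.lapl_eq_zero x hx hgap, neg_zero]
    continuousOn := S.continuousOn.neg
    eq_of_gap_eq_zero := fun x hx hgap => congrArg Neg.neg (S.eq_of_gap_eq_zero x hx hgap)
    eq_of_gap_eq_width := fun x hx hgap => congrArg Neg.neg (S.eq_of_gap_eq_width x hx hgap)
    abs_le := fun x hx hgap => (abs_neg _).trans_le (S.abs_le x hx hgap) }

lemma gapSlope_pos (S : NeckSide n σ c κ C₀ ε M C₁ h δ φ ψ u) (y : Ep n) :
    0 < gapSlope ε M φ ψ y :=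
  S.M_pos.trans_le (le_gapSlope S.ε_pos)

lemma sideConst_mul_gapSlope_nonneg (S : NeckSide n σ c κ C₀ ε M C₁ h δ φ ψ u) (y : Ep n) :
    0 ≤ sideConst n κ C₀ C₁ * gapSlope ε M φ ψ y :=
  mul_nonneg (sideConst_nonneg S.κ_pos.le S.C₀_pos.le S.C₁_nonneg) (S.gapSlope_pos y).le

lemma sub_le_mul (S : NeckSide n σ c κ C₀ ε M C₁ h δ φ ψ u) (hx : ‖x.1‖ < 3 / 4)
    (hgap : gap σ c h x ∈ Set.Icc 0 (δ x.1)) : φ x.1 - u x ≤ (C₁ + 1) * M := by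
  linarith [le_of_abs_le (S.bdry.abs_le x.1 (by linarith)), neg_le_of_abs_le (S.abs_le x hx hgap)]

lemma sub_le_barrier_of_notMem_openNeckBox (S : NeckSide n σ c κ C₀ ε M C₁ h δ φ ψ u)
    (ha : 0 ≤ a) (hb : 0 ≤ b) (hτ : 0 < τ) (hball : closedBall y₀ s ⊆ ball 0 (3 / 4))
    (hlateral : (C₁ + 1) * M ≤ b * s ^ 2)
    (hfar : ∀ y ∈ closedBall y₀ s, |φ y - ψ y| ≤ a * δ y + b * ‖y - y₀‖ ^ 2)
    (htop : ∀ y ∈ closedBall y₀ s, τ ≤ δ y → (C₁ + 1) * M ≤ a * τ)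
    (hx : x ∈ neckBox σ c h (fun y => min τ (δ y)) y₀ s)
    (hxD : x ∉ openNeckBox σ c h (fun y => min τ (δ y)) y₀ s) :
    φ x.1 - u x ≤ barrier σ c h a b τ y₀ x := by
  obtain ⟨hxs, hgap₀, hgap⟩ := hx
  have hx' : ‖x.1‖ < 3 / 4 := mem_ball_zero_iff.1 (hball hxs)
  have hsub : φ x.1 - u x ≤ (C₁ + 1) * M :=
    S.sub_le_mul hx' ⟨hgap₀, hgap.trans (min_le_right _ _)⟩
  refine le_trans ?_ (mul_gap_add_le_barrier ha hτ ⟨hgap₀, hgap.trans (min_le_left _ _)⟩)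
  have hgap_term : 0 ≤ a * gap σ c h x := by positivity
  have hnorm_term : 0 ≤ b * ‖x.1 - y₀‖ ^ 2 := by positivity
  rcases hgap₀.eq_or_lt with hzero | hpos
  · rw [S.eq_of_gap_eq_zero x (by linarith) hzero.symm]
    linarith
  rcases hgap.eq_or_lt with heq | hlt
  · rcases le_total τ (δ x.1) with hτδ | hδτ
    · rw [heq.trans (min_eq_left hτδ)]
      linarith [htop x.1 hxs hτδ]
    · replace heq : gap σ c h x = δ x.1 := heq.trans (min_eq_right hδτ)
      rw [S.eq_of_gap_eq_width x (by linarith) heq, heq]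
      exact (le_abs_self _).trans (hfar x.1 hxs)
  · have hs : ‖x.1 - y₀‖ = s := (mem_closedBall_iff_norm.1 hxs).antisymm
      (not_lt.1 fun hlt' => hxD ⟨mem_ball_iff_norm.2 hlt', hpos, hlt⟩)
    rw [hs] at hnorm_term ⊢
    linarith

lemma lapl_barrier_add_sub_neg [NeZero n] (S : NeckSide n σ c κ C₀ ε M C₁ h δ φ ψ u)
    (ha : 0 ≤ a) (hb : 0 ≤ b) (hτ : 0 < τ) (hτκ : 2 * n * κ * τ ≤ 1)
    (hsuper : 2 * n * b + n * M < a / τ) (hx : ‖x.1‖ < 1)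
    (hgap : gap σ c h x ∈ Set.Ioo 0 (min τ (δ x.1))) :
    lapl n (fun z => barrier σ c h a b τ y₀ z + (u z + -φ z.1)) x < 0 := by
  have hgapδ : gap σ c h x ∈ Set.Ioo 0 (δ x.1) := ⟨hgap.1, hgap.2.trans_le (min_le_right _ _)⟩
  have hu := S.contDiffAt x hx hgapδ
  have hφ := S.bdry.contDiffAt_comp_fst hx
  rw [lapl_add (contDiffAt_barrier S.graph hx) (hu.add hφ.neg), lapl_add hu hφ.neg, lapl_neg hφ,
    S.lapl_eq_zero x hx hgapδ]
  linarith [lapl_barrier_le (y₀ := y₀) S.abs_sign S.graph hx ha hb hτ hτκ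
    ⟨hgap.1.le, hgap.2.le.trans (min_le_left _ _)⟩,
    neg_le_of_abs_le (S.bdry.abs_lapl_comp_fst_le hx)]

lemma sub_le_barrier [NeZero n] (S : NeckSide n σ c κ C₀ ε M C₁ h δ φ ψ u)
    (ha : 0 ≤ a) (hb : 0 ≤ b) (hτ : 0 < τ) (hτκ : 2 * n * κ * τ ≤ 1)
    (hsuper : 2 * n * b + n * M < a / τ) (hball : closedBall y₀ s ⊆ ball 0 (3 / 4))
    (hlateral : (C₁ + 1) * M ≤ b * s ^ 2)
    (hfar : ∀ y ∈ closedBall y₀ s, |φ y - ψ y| ≤ a * δ y + b * ‖y - y₀‖ ^ 2)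
    (htop : ∀ y ∈ closedBall y₀ s, τ ≤ δ y → (C₁ + 1) * M ≤ a * τ)
    (hx : x ∈ neckBox σ c h (fun y => min τ (δ y)) y₀ s) :
    φ x.1 - u x ≤ barrier σ c h a b τ y₀ x := by
  have hball' : closedBall y₀ s ⊆ closedBall 0 1 :=
    hball.trans (ball_subset_closedBall.trans (closedBall_subset_closedBall (by norm_num)))
  have hnorm {z : Efull n} (hz : z.1 ∈ closedBall y₀ s) : ‖z.1‖ < 1 :=
    (mem_ball_zero_iff.1 (hball hz)).trans (by norm_num)
  have hheight : ContinuousOn (fun y => min τ (δ y)) (closedBall 0 1) :=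
    continuousOn_const.inf S.continuousOn_width
  suffices hmin : 0 ≤ barrier σ c h a b τ y₀ x + (u x + -φ x.1) by linarith
  refine nonneg_of_lapl_neg (f := fun z => barrier σ c h a b τ y₀ z + (u z + -φ z.1))
    (isCompact_neckBox S.abs_sign S.graph hheight (fun y => min_le_left _ _) hball')
    (isOpen_openNeckBox S.graph hheight (ball_subset_closedBall.trans hball'))
    openNeckBox_subset_neckBox ?_ ?_ ?_ ?_ x hx
  · have hcyl : neckBox σ c h (fun y => min τ (δ y)) y₀ s ⊆ {z : Efull n | ‖z.1‖ ≤ 1} :=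
      fun z hz => (hnorm hz.1).le
    exact ((continuousOn_barrier S.graph).mono hcyl).add ((S.continuousOn.mono fun z hz =>
      ⟨hnorm hz.1, hz.2.1, hz.2.2.trans (min_le_right _ _)⟩).add
        (S.bdry.continuousOn_comp_fst.mono hcyl).neg)
  · rintro z ⟨hz, hgap⟩
    have hz' := hnorm (ball_subset_closedBall hz)
    exact (contDiffAt_barrier S.graph hz').add
      ((S.contDiffAt z hz' ⟨hgap.1, hgap.2.trans_le (min_le_right _ _)⟩).add
        (S.bdry.contDiffAt_comp_fst hz').neg)
  · rintro z ⟨hz, hgap⟩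
    exact S.lapl_barrier_add_sub_neg ha hb hτ hτκ hsuper (hnorm (ball_subset_closedBall hz)) hgap
  · rintro z ⟨hz, hzD⟩
    linarith [S.sub_le_barrier_of_notMem_openNeckBox ha hb hτ hball hlateral hfar htop hz hzD]

lemma lateral_le (S : NeckSide n σ c κ C₀ ε M C₁ h δ φ ψ u) (y₀ : Ep n) :
    (C₁ + 1) * M ≤ 64 * (C₁ + 1) * M / (ε + ‖y₀‖ ^ 2) * neckRadius ε y₀ ^ 2 := by
  have hε := S.ε_pos
  rw [neckRadius_sq hε]
  exact le_of_eq (by field_simp)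

lemma lapl_coeff_lt [NeZero n] (S : NeckSide n σ c κ C₀ ε M C₁ h δ φ ψ u) (hy₀ : ‖y₀‖ < 1) :
    2 * n * (64 * (C₁ + 1) * M / (ε + ‖y₀‖ ^ 2)) + n * M <
      sideConst n κ C₀ C₁ * gapSlope ε M φ ψ y₀ / neckHeight n κ C₀ (ε + ‖y₀‖ ^ 2) := by
  have hκ := S.κ_pos
  have hC₀ := S.C₀_pos
  have hε := S.ε_pos
  have hM := S.M_pos
  have hC₁ := S.C₁_nonneg
  have hn : (0 : ℝ) < n := Nat.cast_pos.2 (NeZero.pos n)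
  have hp2 : ε + ‖y₀‖ ^ 2 < 2 := by nlinarith [S.ε_le_one, norm_nonneg y₀]
  have hτ := neckHeight_pos (n := n) (p := ε + ‖y₀‖ ^ 2) hκ hC₀ (by positivity)
  have hcoeff : 4 * C₀ * (130 * n * (C₁ + 1)) * M ≤
      sideConst n κ C₀ C₁ * gapSlope ε M φ ψ y₀ :=
    mul_le_mul (mul_le_sideConst hκ.le hC₁) (le_gapSlope hε) hM.le
      (sideConst_nonneg hκ.le hC₀.le hC₁)
  have hlast : n * M < 2 * n * (C₁ + 1) * M / (ε + ‖y₀‖ ^ 2) := by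
    rw [lt_div_iff₀ (by positivity)]
    calc n * M * (ε + ‖y₀‖ ^ 2) < n * M * 2 := by gcongr
      _ ≤ n * M * 2 * (C₁ + 1) := le_mul_of_one_le_right (by positivity) (by linarith)
      _ = 2 * n * (C₁ + 1) * M := by ring
  calc 2 * n * (64 * (C₁ + 1) * M / (ε + ‖y₀‖ ^ 2)) + n * M
      < 2 * n * (64 * (C₁ + 1) * M / (ε + ‖y₀‖ ^ 2)) +
          2 * n * (C₁ + 1) * M / (ε + ‖y₀‖ ^ 2) := by gcongr
    _ = 4 * C₀ * (130 * n * (C₁ + 1)) * M / (4 * C₀ * (ε + ‖y₀‖ ^ 2)) := by field_simp; ring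
    _ ≤ sideConst n κ C₀ C₁ * gapSlope ε M φ ψ y₀ / neckHeight n κ C₀ (ε + ‖y₀‖ ^ 2) := by
        gcongr
        · exact S.sideConst_mul_gapSlope_nonneg y₀
        · exact min_le_left _ _

lemma abs_bdry_sub_le (S : NeckSide n σ c κ C₀ ε M C₁ h δ φ ψ u) (hy : ‖y‖ < 1) (hz : ‖z‖ < 1) :
    |φ y - ψ y| ≤ |φ z - ψ z| + 2 * M * ‖y - z‖ := by
  have hφ := S.bdry.abs_sub_le hy hz
  have hψ := S.bdry'.abs_sub_le hy hz
  calc |φ y - ψ y| = |(φ z - ψ z) + ((φ y - φ z) - (ψ y - ψ z))| := by ring_nf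
    _ ≤ |φ z - ψ z| + (|φ y - φ z| + |ψ y - ψ z|) :=
        (abs_add_le _ _).trans (add_le_add_right (abs_sub _ _) _)
    _ ≤ |φ z - ψ z| + 2 * M * ‖y - z‖ := by linarith

lemma far_le [NeZero n] (S : NeckSide n σ c κ C₀ ε M C₁ h δ φ ψ u) (hy₀ : ‖y₀‖ < 1)
    (hy : ‖y‖ < 1) (hyy₀ : y ∈ closedBall y₀ (neckRadius ε y₀)) :
    |φ y - ψ y| ≤ sideConst n κ C₀ C₁ * gapSlope ε M φ ψ y₀ * δ y +
      64 * (C₁ + 1) * M / (ε + ‖y₀‖ ^ 2) * ‖y - y₀‖ ^ 2 := by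
  have hκ := S.κ_pos
  have hC₀ := S.C₀_pos
  have hε := S.ε_pos
  have hM := S.M_pos
  have hC₁ := S.C₁_nonneg
  have hslope := S.gapSlope_pos y₀
  have hwidth : (ε + ‖y₀‖ ^ 2) / (4 * C₀) ≤ δ y := by
    rw [← div_div]
    exact le_trans (by gcongr; exact quarter_le_add_sq hε hyy₀) (S.le_width y hy.le)
  have hdata : |φ y₀ - ψ y₀| + M * (ε + ‖y₀‖ ^ 2) ≤
      sideConst n κ C₀ C₁ * gapSlope ε M φ ψ y₀ * δ y := by
    calc |φ y₀ - ψ y₀| + M * (ε + ‖y₀‖ ^ 2)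
        = 4 * C₀ * gapSlope ε M φ ψ y₀ * ((ε + ‖y₀‖ ^ 2) / (4 * C₀)) := by
          rw [← gapSlope_mul hε]; field_simp
      _ ≤ sideConst n κ C₀ C₁ * gapSlope ε M φ ψ y₀ * δ y := by
          gcongr
          · exact S.sideConst_mul_gapSlope_nonneg y₀
          · exact four_mul_le_sideConst hκ.le hC₀.le hC₁
  have hcoeff : M / (ε + ‖y₀‖ ^ 2) * ‖y - y₀‖ ^ 2 ≤
      64 * (C₁ + 1) * M / (ε + ‖y₀‖ ^ 2) * ‖y - y₀‖ ^ 2 := by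
    gcongr
    exact le_mul_of_one_le_left hM.le (by linarith)
  linarith [S.abs_bdry_sub_le hy hy₀, two_mul_mul_le hM.le (p := ε + ‖y₀‖ ^ 2) (by positivity)
    ‖y - y₀‖]

lemma top_le [NeZero n] (S : NeckSide n σ c κ C₀ ε M C₁ h δ φ ψ u) (hy : ‖y‖ < 1)
    (hyy₀ : y ∈ closedBall y₀ (neckRadius ε y₀))
    (hτ : neckHeight n κ C₀ (ε + ‖y₀‖ ^ 2) ≤ δ y) :
    (C₁ + 1) * M ≤ sideConst n κ C₀ C₁ * gapSlope ε M φ ψ y₀ *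
      neckHeight n κ C₀ (ε + ‖y₀‖ ^ 2) := by
  have hκ := S.κ_pos
  have hC₀ := S.C₀_pos
  have hε := S.ε_pos
  have hM := S.M_pos
  have hC₁ := S.C₁_nonneg
  have hn : (0 : ℝ) < n := Nat.cast_pos.2 (NeZero.pos n)
  have hlow : neckHeight n κ C₀ (ε + ‖y₀‖ ^ 2) < 4 * C₀ * (ε + ‖y₀‖ ^ 2) := by
    calc neckHeight n κ C₀ (ε + ‖y₀‖ ^ 2) ≤ C₀ * (ε + ‖y‖ ^ 2) := hτ.trans (S.width_le y hy.le)
      _ ≤ C₀ * (3 * (ε + ‖y₀‖ ^ 2)) := by gcongr; exact add_sq_le_three_mul hε hyy₀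
      _ < 4 * C₀ * (ε + ‖y₀‖ ^ 2) := by
          have : 0 < C₀ * (ε + ‖y₀‖ ^ 2) := by positivity
          linarith
  rw [neckHeight_eq_of_lt hlow]
  calc (C₁ + 1) * M = (C₁ + 1) * (2 * n * κ) * M * (1 / (2 * n * κ)) := by field_simp
    _ ≤ sideConst n κ C₀ C₁ * gapSlope ε M φ ψ y₀ * (1 / (2 * n * κ)) := by
        gcongr
        · exact sideConst_nonneg hκ.le hC₀.le hC₁
        · exact mul_le_sideConst' hC₀.le hC₁
        · exact le_gapSlope hε

lemma sub_le [NeZero n] (S : NeckSide n σ c κ C₀ ε M C₁ h δ φ ψ u) (hx : ‖x.1‖ < 9 / 16)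
    (hgap : gap σ c h x ∈ Set.Icc 0 (δ x.1)) :
    φ x.1 - u x ≤ 2 * (sideConst n κ C₀ C₁ * gapSlope ε M φ ψ x.1) * gap σ c h x := by
  have hκ := S.κ_pos
  have hC₀ := S.C₀_pos
  have hε := S.ε_pos
  have hM := S.M_pos
  have hC₁ := S.C₁_nonneg
  have ha := S.sideConst_mul_gapSlope_nonneg x.1
  have hτ := neckHeight_pos (n := n) (p := ε + ‖x.1‖ ^ 2) hκ hC₀ (by positivity)
  have hball := closedBall_neckRadius_subset hε S.ε_le_one hx
  have hcenter : x.1 ∈ closedBall x.1 (neckRadius ε x.1) :=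
    mem_closedBall_self (by unfold neckRadius; positivity)
  have hnorm {y : Ep n} (hy : y ∈ closedBall x.1 (neckRadius ε x.1)) : ‖y‖ < 1 :=
    (mem_ball_zero_iff.1 (hball hy)).trans (by norm_num)
  rcases le_total (gap σ c h x) (neckHeight n κ C₀ (ε + ‖x.1‖ ^ 2)) with hlow | hhigh
  · exact (S.sub_le_barrier ha (by positivity) hτ (mul_neckHeight_le_one hκ)
      (S.lapl_coeff_lt (by linarith)) hball (S.lateral_le x.1)
      (fun y hy => S.far_le (by linarith) (hnorm hy) hy) (fun y hy => S.top_le (hnorm hy) hy)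
      ⟨hcenter, hgap.1, le_min hlow hgap.2⟩).trans (barrier_self_le ha hτ hgap.1)
  · calc φ x.1 - u x ≤ (C₁ + 1) * M := S.sub_le_mul (by linarith) hgap
      _ ≤ sideConst n κ C₀ C₁ * gapSlope ε M φ ψ x.1 * neckHeight n κ C₀ (ε + ‖x.1‖ ^ 2) :=
          S.top_le (hnorm hcenter) hcenter (hhigh.trans hgap.2)
      _ ≤ 2 * (sideConst n κ C₀ C₁ * gapSlope ε M φ ψ x.1) * gap σ c h x := by
          exact mul_le_mul (by linarith) hhigh hτ.le (by positivity)

lemma abs_sub_le [NeZero n] (S : NeckSide n σ c κ C₀ ε M C₁ h δ φ ψ u) (hx : ‖x.1‖ < 9 / 16)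
    (hgap : gap σ c h x ∈ Set.Icc 0 (δ x.1)) :
    |u x - φ x.1| ≤ 2 * (sideConst n κ C₀ C₁ * gapSlope ε M φ ψ x.1) * gap σ c h x := by
  have hslope : gapSlope ε M (fun y => -φ y) (fun y => -ψ y) x.1 = gapSlope ε M φ ψ x.1 := by
    rw [gapSlope, gapSlope, neg_sub_neg, abs_sub_comm]
  have hneg := S.neg.sub_le hx hgap
  rw [hslope] at hneg
  exact abs_sub_le_iff.2 ⟨by linarith, S.sub_le hx hgap⟩

end NeckSide

/-! ### The gradient estimate -/

/-- The ratio of the distance of a point to the nearer graph to the radius of the ball on which the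
interior gradient estimate is applied. -/
def ballRatio (κ C₀ : ℝ) : ℝ := 16 * (1 + κ + C₀)

/-- The constant of the gradient estimate `NeckSide.norm_fderiv_le`. -/
def neckGradConst (n : ℕ) (κ C₀ C₁ : ℝ) : ℝ :=
  gradConst n * (16 * sideConst n κ C₀ C₁ * ballRatio κ C₀ + 1)

lemma neckGradConst_nonneg {n : ℕ} {κ C₀ C₁ : ℝ} (hκ : 0 ≤ κ) (hC₀ : 0 ≤ C₀) (hC₁ : 0 ≤ C₁) :
    0 ≤ neckGradConst n κ C₀ C₁ := by
  have hgrad := gradConst_nonneg n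
  have hside := sideConst_nonneg (n := n) hκ hC₀ hC₁
  unfold neckGradConst ballRatio
  positivity

namespace NeckSide

variable {n : ℕ} {σ c κ C₀ ε M C₁ R : ℝ} {h δ φ ψ : Ep n → ℝ} {u : Efull n → ℝ}
  {x y : Efull n} {y₀ z : Ep n}

lemma mem_closedBall_neckRadius (S : NeckSide n σ c κ C₀ ε M C₁ h δ φ ψ u) (hy₀ : ‖y₀‖ < 1)
    (hz : ‖z - y₀‖ ≤ (ε + ‖y₀‖ ^ 2) / 32) : z ∈ closedBall y₀ (neckRadius ε y₀) := by
  have hε := S.ε_pos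
  have hp2 : ε + ‖y₀‖ ^ 2 < 2 := by nlinarith [S.ε_le_one, norm_nonneg y₀]
  have hsqrt : (ε + ‖y₀‖ ^ 2) / 4 ≤ √(ε + ‖y₀‖ ^ 2) := Real.le_sqrt_of_sq_le (by nlinarith)
  rw [mem_closedBall_iff_norm, neckRadius]
  linarith

lemma gapSlope_le_four_mul (S : NeckSide n σ c κ C₀ ε M C₁ h δ φ ψ u) (hy₀ : ‖y₀‖ < 1)
    (hz : ‖z‖ < 1) (hzy₀ : ‖z - y₀‖ ≤ (ε + ‖y₀‖ ^ 2) / 32) :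
    gapSlope ε M φ ψ z ≤ 4 * gapSlope ε M φ ψ y₀ := by
  have hε := S.ε_pos
  have hM := S.M_pos
  have hdata : |φ z - ψ z| ≤ |φ y₀ - ψ y₀| + M * (ε + ‖y₀‖ ^ 2) / 16 := by
    have hmul : M * ‖z - y₀‖ ≤ M * ((ε + ‖y₀‖ ^ 2) / 32) := by gcongr
    linarith [S.abs_bdry_sub_le hz hy₀]
  have hwidth := quarter_le_add_sq hε (S.mem_closedBall_neckRadius hy₀ hzy₀)
  calc gapSlope ε M φ ψ z
      ≤ (|φ y₀ - ψ y₀| + M * (ε + ‖y₀‖ ^ 2) / 16) / ((ε + ‖y₀‖ ^ 2) / 4) + M := by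
        unfold gapSlope
        gcongr
    _ = 4 * (|φ y₀ - ψ y₀| / (ε + ‖y₀‖ ^ 2)) + M / 4 + M := by field_simp; ring
    _ ≤ 4 * gapSlope ε M φ ψ y₀ := by
        unfold gapSlope
        linarith

lemma radius_le_of_ballRatio_mul_eq (S : NeckSide n σ c κ C₀ ε M C₁ h δ φ ψ u)
    (hx : ‖x.1‖ ≤ 1) (hmid : 2 * gap σ c h x ≤ δ x.1) (hR₀ : 0 ≤ R)
    (hR : ballRatio κ C₀ * R = gap σ c h x) : R ≤ (ε + ‖x.1‖ ^ 2) / 32 := by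
  have hC₀ := S.C₀_pos
  have hκ := S.κ_pos
  have hle : C₀ * (32 * R) ≤ C₀ * (ε + ‖x.1‖ ^ 2) := by
    calc C₀ * (32 * R) = 2 * (16 * C₀ * R) := by ring
      _ ≤ 2 * (ballRatio κ C₀ * R) := by
          gcongr
          unfold ballRatio
          linarith
      _ ≤ C₀ * (ε + ‖x.1‖ ^ 2) := by linarith [S.width_le x.1 hx]
  linarith [le_of_mul_le_mul_left hle hC₀]

lemma gap_mem_Ioo_and_le_of_norm_sub_le (S : NeckSide n σ c κ C₀ ε M C₁ h δ φ ψ u)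
    (hx : ‖x.1‖ < 1) (hy : ‖y.1‖ < 1) (hmid : 2 * gap σ c h x ≤ δ x.1) (hR₀ : 0 < R)
    (hR : ballRatio κ C₀ * R = gap σ c h x) (hyx : ‖y - x‖ ≤ R) :
    gap σ c h y ∈ Set.Ioo 0 (δ y.1) ∧ gap σ c h y ≤ 2 * gap σ c h x := by
  have hκR : 0 < κ * R := mul_pos S.κ_pos hR₀
  have hC₀R : 0 < C₀ * R := mul_pos S.C₀_pos hR₀
  have hgap : |gap σ c h y - gap σ c h x| ≤ (κ + 1) * R :=
    (abs_gap_sub_gap_le S.abs_sign S.graph hx hy).trans (by gcongr; linarith [S.κ_pos])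
  have hwidth : |δ y.1 - δ x.1| ≤ 2 * κ * R :=
    (S.abs_width_sub_le y.1 x.1 hy hx).trans <| by
      gcongr
      · linarith [S.κ_pos]
      · exact (norm_fst_le (y - x)).trans hyx
  unfold ballRatio at hR
  obtain ⟨hgap₁, hgap₂⟩ := _root_.abs_le.1 hgap
  refine ⟨⟨?_, ?_⟩, ?_⟩ <;> linarith [neg_le_of_abs_le hwidth]

lemma abs_sub_le_mul_of_norm_sub_le [NeZero n] (S : NeckSide n σ c κ C₀ ε M C₁ h δ φ ψ u)
    (hx : ‖x.1‖ < 1) (hy : ‖y.1‖ < 9 / 16) (hmid : 2 * gap σ c h x ≤ δ x.1) (hR₀ : 0 < R)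
    (hR : ballRatio κ C₀ * R = gap σ c h x) (hyx : ‖y - x‖ ≤ R) :
    |u y - φ x.1| ≤
      (16 * sideConst n κ C₀ C₁ * ballRatio κ C₀ + 1) * gapSlope ε M φ ψ x.1 * R := by
  have hfst : ‖y.1 - x.1‖ ≤ R := (norm_fst_le (y - x)).trans hyx
  obtain ⟨hgap, hgap_le⟩ :=
    S.gap_mem_Ioo_and_le_of_norm_sub_le hx (hy.trans (by norm_num)) hmid hR₀ hR hyx
  have hslope : gapSlope ε M φ ψ y.1 ≤ 4 * gapSlope ε M φ ψ x.1 :=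
    S.gapSlope_le_four_mul hx (by linarith)
      (hfst.trans (S.radius_le_of_ballRatio_mul_eq hx.le hmid hR₀.le hR))
  have hgrowth : |u y - φ y.1| ≤
      2 * (sideConst n κ C₀ C₁ * (4 * gapSlope ε M φ ψ x.1)) * (2 * gap σ c h x) := by
    refine (S.abs_sub_le hy ⟨hgap.1.le, hgap.2.le⟩).trans ?_
    have hside := sideConst_nonneg (n := n) S.κ_pos.le S.C₀_pos.le S.C₁_nonneg
    have hslope_pos := S.gapSlope_pos x.1
    have hgap_nonneg := hgap.1.le
    gcongr
  have hdata : |φ y.1 - φ x.1| ≤ gapSlope ε M φ ψ x.1 * R :=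
    (S.bdry.abs_sub_le (by linarith) hx).trans
      (mul_le_mul (le_gapSlope S.ε_pos) hfst (norm_nonneg _) (S.gapSlope_pos x.1).le)
  calc |u y - φ x.1| ≤ |u y - φ y.1| + |φ y.1 - φ x.1| := _root_.abs_sub_le _ _ _
    _ ≤ 2 * (sideConst n κ C₀ C₁ * (4 * gapSlope ε M φ ψ x.1)) * (2 * gap σ c h x) +
          gapSlope ε M φ ψ x.1 * R := add_le_add hgrowth hdata
    _ = (16 * sideConst n κ C₀ C₁ * ballRatio κ C₀ + 1) * gapSlope ε M φ ψ x.1 * R := by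
        rw [← hR]; ring

lemma norm_fderiv_le [NeZero n] (S : NeckSide n σ c κ C₀ ε M C₁ h δ φ ψ u) (hx : ‖x.1‖ < 1 / 2)
    (hpos : 0 < gap σ c h x) (hmid : 2 * gap σ c h x ≤ δ x.1) :
    ‖fderiv ℝ u x‖ ≤ neckGradConst n κ C₀ C₁ * gapSlope ε M φ ψ x.1 := by
  have hratio : 0 < ballRatio κ C₀ := by
    have hκ := S.κ_pos
    have hC₀ := S.C₀_pos
    unfold ballRatio
    positivity
  obtain ⟨R, hR⟩ : ∃ R, ballRatio κ C₀ * R = gap σ c h x :=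
    ⟨_, mul_div_cancel₀ _ hratio.ne'⟩
  have hR₀ : 0 < R := pos_of_mul_pos_right (hR ▸ hpos) hratio.le
  have hx1 : ‖x.1‖ < 1 := by linarith
  have hball {y : Efull n} (hy : y ∈ ball x R) : ‖y - x‖ ≤ R ∧ ‖y.1‖ < 9 / 16 := by
    rw [mem_ball_iff_norm] at hy
    have hRp := S.radius_le_of_ballRatio_mul_eq hx1.le hmid hR₀.le hR
    have hfst : ‖y.1 - x.1‖ < R := (norm_fst_le (y - x)).trans_lt hy
    refine ⟨hy.le, ?_⟩
    nlinarith [norm_le_norm_add_norm_sub' y.1 x.1, S.ε_le_one, norm_nonneg x.1]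
  have hmem {y : Efull n} (hy : y ∈ ball x R) : ‖y.1‖ < 1 ∧ gap σ c h y ∈ Set.Ioo 0 (δ y.1) := by
    obtain ⟨hyx, hy'⟩ := hball hy
    have hy1 : ‖y.1‖ < 1 := by linarith
    exact ⟨hy1, (S.gap_mem_Ioo_and_le_of_norm_sub_le hx1 hy1 hmid hR₀ hR hyx).1⟩
  refine (norm_fderiv_le_of_lapl_eq_zero hR₀
    (fun y hy => S.contDiffAt y (hmem hy).1 (hmem hy).2)
    (fun y hy => S.lapl_eq_zero y (hmem hy).1 (hmem hy).2)
    (fun y hy => S.abs_sub_le_mul_of_norm_sub_le hx1 (hball hy).2 hmid hR₀ hR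
      (hball hy).1)).trans_eq ?_
  unfold neckGradConst
  field_simp

end NeckSide

/-! ### The two sides of the neck -/

lemma NeckSide.swap {n : ℕ} {σ c c' κ C₀ ε M C₁ : ℝ} {h h' δ φ ψ : Ep n → ℝ} {u : Efull n → ℝ}
    (S : NeckSide n σ c κ C₀ ε M C₁ h δ φ ψ u) (hh' : C2BoundedBy n h' κ)
    (hgap : ∀ x, gap (-σ) c' h' x = δ x.1 - gap σ c h x) :
    NeckSide n (-σ) c' κ C₀ ε M C₁ h' δ ψ φ u := by
  have hIoo {x : Efull n} (hx : gap (-σ) c' h' x ∈ Set.Ioo 0 (δ x.1)) :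
      gap σ c h x ∈ Set.Ioo 0 (δ x.1) := by
    rw [hgap] at hx
    exact ⟨by linarith [hx.2], by linarith [hx.1]⟩
  have hIcc {x : Efull n} (hx : gap (-σ) c' h' x ∈ Set.Icc 0 (δ x.1)) :
      gap σ c h x ∈ Set.Icc 0 (δ x.1) := by
    rw [hgap] at hx
    exact ⟨by linarith [hx.2], by linarith [hx.1]⟩
  exact
    { S with
      abs_sign := (abs_neg σ).trans S.abs_sign
      graph := hh'
      bdry := S.bdry'
      bdry' := S.bdry
      contDiffAt := fun x hx hxgap => S.contDiffAt x hx (hIoo hxgap)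
      lapl_eq_zero := fun x hx hxgap => S.lapl_eq_zero x hx (hIoo hxgap)
      continuousOn := S.continuousOn.mono fun x hx => ⟨hx.1, hIcc hx.2⟩
      eq_of_gap_eq_zero := fun x hx hxgap => S.eq_of_gap_eq_width x hx (by linarith [hgap x])
      eq_of_gap_eq_width := fun x hx hxgap => S.eq_of_gap_eq_zero x hx (by linarith [hgap x])
      abs_le := fun x hx hxgap => S.abs_le x hx (hIcc hxgap) }

section Omega

variable {n : ℕ} {ε r : ℝ} {h1 h2 : Ep n → ℝ} {x : Efull n}

lemma mem_Omega_of_gap_mem_Ioo (hx : ‖x.1‖ < r)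
    (hgap : gap 1 (ε / 2) h1 x ∈ Set.Ioo 0 (ε + h1 x.1 - h2 x.1)) : x ∈ Omega n ε h1 h2 r := by
  unfold gap at hgap
  exact ⟨hx, by linarith [hgap.2], by linarith [hgap.1]⟩

lemma mem_Omega_or_mem_Gammap_or_mem_Gammam (hx : ‖x.1‖ < r)
    (hgap : gap 1 (ε / 2) h1 x ∈ Set.Icc 0 (ε + h1 x.1 - h2 x.1)) :
    x ∈ Omega n ε h1 h2 r ∨ x ∈ Gammap n ε h1 r ∨ x ∈ Gammam n ε h2 r := by
  rcases hgap.1.eq_or_lt with hzero | hpos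
  · exact .inr (.inl ⟨hx.le, by unfold gap at hzero; linarith⟩)
  rcases hgap.2.eq_or_lt with heq | hlt
  · exact .inr (.inr ⟨hx.le, by unfold gap at heq; linarith⟩)
  · exact .inl (mem_Omega_of_gap_mem_Ioo hx ⟨hpos, hlt⟩)

end Omega

namespace HarmBV

variable {n : ℕ} {ε κ C₀ C₁ M : ℝ} {h1 h2 φ ψ : Ep n → ℝ} {u : Efull n → ℝ} {x : Efull n}

lemma eq_of_mem_Gammap (hu : HarmBV n ε h1 h2 u φ ψ) (hx : x ∈ Gammap n ε h1 1) :
    u x = φ x.1 := by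
  rw [← (hu.2.2.2.2 x.1 hx.1).1, ← hx.2]

lemma eq_of_mem_Gammam (hu : HarmBV n ε h1 h2 u φ ψ) (hx : x ∈ Gammam n ε h2 1) :
    u x = ψ x.1 := by
  rw [← (hu.2.2.2.2 x.1 hx.1).2, ← hx.2]

lemma abs_le_of_gap_mem_Icc [NeZero n] (hh1 : ContinuousOn h1 (closedBall 0 1))
    (hh2 : ContinuousOn h2 (closedBall 0 1)) (hu : HarmBV n ε h1 h2 u φ ψ) (hM : 0 ≤ M)
    (hφ : ∀ y, ‖y‖ ≤ 1 → |φ y| ≤ M) (hψ : ∀ y, ‖y‖ ≤ 1 → |ψ y| ≤ M)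
    (hL : √(∫ y in Omega n ε h1 h2 1, ‖u y‖ ^ 2) ≤ M) (hx : ‖x.1‖ < 3 / 4)
    (hgap : gap 1 (ε / 2) h1 x ∈ Set.Icc 0 (ε + h1 x.1 - h2 x.1)) :
    |u x| ≤ (1 + supConst n (1 / 8)) * M := by
  have hsup : 0 ≤ supConst n (1 / 8) := Real.sqrt_nonneg _
  have hx1 : ‖x.1‖ ≤ 1 := by linarith
  have hM_le : M ≤ (1 + supConst n (1 / 8)) * M := le_mul_of_one_le_left hM (by linarith)
  rcases mem_Omega_or_mem_Gammap_or_mem_Gammam hx hgap with hΩ | htop | hbot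
  · calc |u x| ≤ M + supConst n (1 / 8) * √(∫ y in Omega n ε h1 h2 1, ‖u y‖ ^ 2) :=
          hu.abs_le_add hh1 hh2 hφ hψ hΩ
      _ ≤ M + supConst n (1 / 8) * M := by gcongr
      _ = (1 + supConst n (1 / 8)) * M := by ring
  · rw [hu.eq_of_mem_Gammap ⟨hx1, htop.2⟩]
    exact (hφ x.1 hx1).trans hM_le
  · rw [hu.eq_of_mem_Gammam ⟨hx1, hbot.2⟩]
    exact (hψ x.1 hx1).trans hM_le

lemma neckSide [NeZero n] (hu : HarmBV n ε h1 h2 u φ ψ) (hκ : 0 < κ) (hC₀ : 0 < C₀) (hε : 0 < ε)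
    (hε1 : ε ≤ 1) (hM : 0 < M) (hh1 : C2BoundedBy n h1 κ) (hh2 : C2BoundedBy n h2 κ)
    (hδ : DeltaComp n ε C₀ h1 h2) (hφ : C2BoundedBy n φ M) (hψ : C2BoundedBy n ψ M)
    (hL : √(∫ y in Omega n ε h1 h2 1, ‖u y‖ ^ 2) ≤ M) :
    NeckSide n 1 (ε / 2) κ C₀ ε M (1 + supConst n (1 / 8)) h1 (fun y => ε + h1 y - h2 y) φ ψ u where
  abs_sign := abs_one
  κ_pos := hκ
  C₀_pos := hC₀
  ε_pos := hε
  ε_le_one := hε1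
  M_pos := hM
  C₁_nonneg := add_nonneg zero_le_one (Real.sqrt_nonneg _)
  graph := hh1
  bdry := hφ
  bdry' := hψ
  continuousOn_width := (continuousOn_const.add hh1.continuousOn).sub hh2.continuousOn
  abs_width_sub_le y z hy hz := by
    have hsub := hh1.abs_sub_le hy hz
    have hsub' := hh2.abs_sub_le hy hz
    calc |(ε + h1 y - h2 y) - (ε + h1 z - h2 z)| = |(h1 y - h1 z) - (h2 y - h2 z)| := by ring_nf
      _ ≤ |h1 y - h1 z| + |h2 y - h2 z| := abs_sub _ _
      _ ≤ 2 * κ * ‖y - z‖ := by linarith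
  le_width y hy := (hδ y hy).1
  width_le y hy := (hδ y hy).2
  contDiffAt x hx hgap := hu.1.contDiffAt
    ((isOpen_Omega hh1.continuousOn hh2.continuousOn).mem_nhds (mem_Omega_of_gap_mem_Ioo hx hgap))
  lapl_eq_zero x hx hgap := hu.2.1 x (mem_Omega_of_gap_mem_Ioo hx hgap)
  continuousOn := hu.2.2.2.1.mono fun x ⟨hx, hgap⟩ =>
    or_assoc.2 (mem_Omega_or_mem_Gammap_or_mem_Gammam hx hgap)
  eq_of_gap_eq_zero x hx hgap :=
    hu.eq_of_mem_Gammap ⟨hx, by unfold gap at hgap; linarith⟩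
  eq_of_gap_eq_width x hx hgap :=
    hu.eq_of_mem_Gammam ⟨hx, by unfold gap at hgap; linarith⟩
  abs_le x hx hgap := hu.abs_le_of_gap_mem_Icc hh1.continuousOn hh2.continuousOn hM.le hφ.abs_le
    hψ.abs_le hL hx hgap

lemma norm_fderiv_le_of_pos [NeZero n] (hu : HarmBV n ε h1 h2 u φ ψ) (hκ : 0 < κ) (hC₀ : 0 < C₀)
    (hε : 0 < ε) (hε1 : ε ≤ 1) (hM : 0 < M) (hh1 : C2BoundedBy n h1 κ)
    (hh2 : C2BoundedBy n h2 κ) (hδ : DeltaComp n ε C₀ h1 h2) (hφ : C2BoundedBy n φ M)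
    (hψ : C2BoundedBy n ψ M) (hL : √(∫ y in Omega n ε h1 h2 1, ‖u y‖ ^ 2) ≤ M)
    (hx : x ∈ Omega n ε h1 h2 (1 / 2)) :
    ‖fderiv ℝ u x‖ ≤
      neckGradConst n κ C₀ (1 + supConst n (1 / 8)) * gapSlope ε M φ ψ x.1 := by
  have Stop := hu.neckSide hκ hC₀ hε hε1 hM hh1 hh2 hδ hφ hψ hL
  have hgap (z : Efull n) :
      gap (-1) (-ε / 2) h2 z = ε + h1 z.1 - h2 z.1 - gap 1 (ε / 2) h1 z := by
    unfold gap
    ring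
  have Sbot := Stop.swap hh2 hgap
  obtain ⟨hx', hlow, hhigh⟩ := hx
  rcases le_total (2 * gap 1 (ε / 2) h1 x) (ε + h1 x.1 - h2 x.1) with hle | hle
  · exact Stop.norm_fderiv_le hx' (by unfold gap; linarith) hle
  · have hbound := Sbot.norm_fderiv_le hx' (by unfold gap; linarith) (by linarith [hgap x])
    rwa [gapSlope, abs_sub_comm] at hbound

lemma norm_fderiv_le [NeZero n] (hu : HarmBV n ε h1 h2 u φ ψ) (hκ : 0 < κ) (hC₀ : 0 < C₀)
    (hε : 0 < ε) (hε1 : ε ≤ 1) (hh1 : C2BoundedBy n h1 κ) (hh2 : C2BoundedBy n h2 κ)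
    (hδ : DeltaComp n ε C₀ h1 h2) (hφ : ContDiffOn ℝ 2 φ (closedBall 0 1))
    (hψ : ContDiffOn ℝ 2 ψ (closedBall 0 1)) (hx : x ∈ Omega n ε h1 h2 (1 / 2)) :
    ‖fderiv ℝ u x‖ ≤ neckGradConst n κ C₀ (1 + supConst n (1 / 8)) *
      gapSlope ε (C2norm n φ + C2norm n ψ + √(∫ y in Omega n ε h1 h2 1, ‖u y‖ ^ 2)) φ ψ x.1 := by
  have hΦ := C2norm_nonneg φ
  have hΨ := C2norm_nonneg ψ
  have hL := Real.sqrt_nonneg (∫ y in Omega n ε h1 h2 1, ‖u y‖ ^ 2)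
  have hcont : Continuous fun M => neckGradConst n κ C₀ (1 + supConst n (1 / 8)) *
      gapSlope ε M φ ψ x.1 := by
    unfold gapSlope
    fun_prop
  -- The barrier is strictly superharmonic only for `M > 0`, so `M` decreases to the bound.
  refine ge_of_tendsto (hcont.continuousWithinAt (s := Set.Ioi
    (C2norm n φ + C2norm n ψ + √(∫ y in Omega n ε h1 h2 1, ‖u y‖ ^ 2)))) ?_
  filter_upwards [self_mem_nhdsWithin] with M hM
  rw [Set.mem_Ioi] at hM
  exact hu.norm_fderiv_le_of_pos hκ hC₀ hε hε1 (by linarith) hh1 hh2 hδ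
    (.of_C2norm_le hφ (by linarith)) (.of_C2norm_le hψ (by linarith)) (by linarith) hx

end HarmBV

theorem stmt3_general (n : ℕ) [NeZero n] (κ1 C₀ : ℝ) (hκ1 : 0 < κ1) (hC₀ : 0 < C₀) :
    ∃ C : ℝ, 0 < C ∧
    ∀ ε ∈ Set.Ioc (0 : ℝ) 1, ∀ h1 h2 : Ep n → ℝ,
      ContDiffOn ℝ 2 h1 (closedBall 0 1) → ContDiffOn ℝ 2 h2 (closedBall 0 1) →
      C2norm n h1 + C2norm n h2 ≤ κ1 → DeltaComp n ε C₀ h1 h2 →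
    ∀ (u : Efull n → ℝ) (φ ψ : Ep n → ℝ),
      ContDiffOn ℝ 2 φ (closedBall 0 1) → ContDiffOn ℝ 2 ψ (closedBall 0 1) →
      HarmBV n ε h1 h2 u φ ψ →
    ∀ x ∈ Omega n ε h1 h2 (1 / 2),
      ‖fderiv ℝ u x‖ ≤
        C * |φ x.1 - ψ x.1| / (ε + ‖x.1‖ ^ 2) +
        C * (C2norm n φ + C2norm n ψ +
          (∫ y in Omega n ε h1 h2 1, ‖u y‖ ^ 2) ^ ((1 : ℝ) / 2)) := by
  have hconst : 0 ≤ neckGradConst n κ1 C₀ (1 + supConst n (1 / 8)) :=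
    neckGradConst_nonneg hκ1.le hC₀.le (add_nonneg zero_le_one (Real.sqrt_nonneg _))
  refine ⟨neckGradConst n κ1 C₀ (1 + supConst n (1 / 8)) + 1, by linarith, ?_⟩
  rintro ε ⟨hε, hε1⟩ h1 h2 hh1 hh2 hnorm hδ u φ ψ hφ hψ hu x hx
  have hgrad := hu.norm_fderiv_le hκ1 hC₀ hε hε1
    (.of_C2norm_le hh1 (by linarith [C2norm_nonneg h2]))
    (.of_C2norm_le hh2 (by linarith [C2norm_nonneg h1])) hδ hφ hψ hx
  have hΦ := C2norm_nonneg φ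
  have hΨ := C2norm_nonneg ψ
  rw [← Real.sqrt_eq_rpow, mul_div_assoc, ← mul_add]
  exact hgrad.trans (mul_le_mul_of_nonneg_right (le_add_of_nonneg_right zero_le_one)
    (le_trans (by positivity) (le_gapSlope hε)))

theorem stmt3 (n : ℕ) (hn : 2 ≤ n) (κ0 κ1 C₀ : ℝ)
    (hκ0 : 0 < κ0) (hκ1 : 0 < κ1) (hC₀ : 1 ≤ C₀) :
    ∃ ε₀ ∈ Set.Ioo (0:ℝ) 1, ∃ C : ℝ, 0 < C ∧
    ∀ ε ∈ Set.Ioo (0:ℝ) ε₀, ∀ h1 h2 : Ep n → ℝ,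
      HGeom n ε κ0 κ1 h1 h2 → DeltaComp n ε C₀ h1 h2 →
    ∀ (u : Efull n → ℝ) (φ ψ : Ep n → ℝ),
      ContDiffOn ℝ 2 φ (closedBall 0 1) → ContDiffOn ℝ 2 ψ (closedBall 0 1) →
      HarmBV n ε h1 h2 u φ ψ →
    ∀ x ∈ Omega n ε h1 h2 (1/2),
      ‖fderiv ℝ u x‖ ≤
        C * |φ x.1 - ψ x.1| / (ε + ‖x.1‖^2) +
        C * (C2norm n φ + C2norm n ψ +
          (∫ y in Omega n ε h1 h2 1, ‖u y‖^2) ^ ((1:ℝ)/2)) := by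
  have : NeZero n := ⟨by omega⟩
  obtain ⟨C, hC, hgrad⟩ := stmt3_general n κ1 C₀ hκ1 (by linarith)
  refine ⟨1 / 2, by norm_num, C, hC, ?_⟩
  rintro ε ⟨hε, hε₀⟩ h1 h2 ⟨hh1, hh2, -, -, -, -, -, -, hnorm⟩ hδ
  exact hgrad ε ⟨hε, by linarith⟩ h1 h2 hh1 hh2 hnorm hδ
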